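/- arXiv:1103.1945 — 3 statements merged into one kernel-verified Lean document; each statement's English description precedes it below -/
import Mathlib

section
/- Let μ be a probability measure on ℝ with infinite support contained in [−M, M], with orthonormal polynomials {p_n}, CD kernel K_n, measures dμ_n = (K_n(x,x;μ)/(n+1)) dμ, and normalized zero-counting measures ν_n. Then for every fixed k ∈ ℕ there exists a constant C (depending only on k and μ) such that for all n ∈ ℕ, |∫_ℝ x^k dμ_n(x) − ∫_ℝ x^k dν_{n+1}(x)| ≤ C/(n+1). -/
open MeasureTheory Polynomial Filter
open scoped ENNReal

/-- The topological support of a measure. -/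
def measSupport {α : Type*} [TopologicalSpace α] [MeasurableSpace α] (μ : Measure α) : Set α :=
  {x | ∀ U : Set α, IsOpen U → x ∈ U → μ U ≠ 0}

section Algebraic

variable (E : ℝ[X] →ₗ[ℝ] ℝ) (M : ℝ) (p : ℕ → ℝ[X])

lemma aux_expand (hdeg : ∀ n, (p n).natDegree = n) (hlead : ∀ n, 0 < (p n).leadingCoeff)
    (N : ℕ) : ∀ f : ℝ[X], f.degree < N → ∃ c : ℕ → ℝ, f = ∑ j ∈ Finset.range N, c j • p j := by
  induction N with
  | zero =>
    intro f hf
    refine ⟨0, ?_⟩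
    have : f = 0 := by
      rw [← degree_eq_bot]
      by_contra h
      rw [degree_eq_natDegree (by simpa using h)] at hf
      exact absurd (Nat.cast_lt.1 hf) (by omega)
    simp [this]
  | succ N ih =>
    intro f hf
    have hc : (p N).coeff N ≠ 0 := by
      have := hlead N
      rw [leadingCoeff, hdeg] at this
      exact this.ne'
    have hfN : f.degree ≤ N := by
      rw [degree_le_iff_coeff_zero]
      intro m hm
      rw [degree_lt_iff_coeff_zero] at hf
      exact hf m (Nat.succ_le_of_lt (Nat.cast_lt.1 hm))
    have hpN : (p N).degree ≤ N := by
      rw [← natDegree_le_iff_degree_le, hdeg]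
    obtain ⟨c, hc'⟩ := ih (f - (f.coeff N / (p N).coeff N) • p N) (by
      rw [degree_lt_iff_coeff_zero]
      intro m hm
      rcases hm.eq_or_lt with rfl | hm
      · simp [hc]
      · have h1 := (degree_le_iff_coeff_zero _ _).1 hfN m (by exact_mod_cast hm)
        have h2 := (degree_le_iff_coeff_zero _ _).1 hpN m (by exact_mod_cast hm)
        simp [h1, h2])
    refine ⟨fun j => if j = N then f.coeff N / (p N).coeff N else c j, ?_⟩
    rw [Finset.sum_range_succ]
    simp only [if_true]
    rw [sub_eq_iff_eq_add] at hc'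
    conv_lhs => rw [hc']
    congr 1
    refine Finset.sum_congr rfl fun j hj => ?_
    rw [if_neg (by simp at hj; omega)]

variable (hdeg : ∀ n, (p n).natDegree = n) (hlead : ∀ n, 0 < (p n).leadingCoeff)
  (horth : ∀ n m, E (p n * p m) = if n = m then 1 else 0)
  (hpos : ∀ f : ℝ[X], (∀ x ∈ Set.Icc (-M) M, 0 ≤ f.eval x) → 0 ≤ E f)
  (hspos : ∀ f : ℝ[X], (∀ x ∈ Set.Icc (-M) M, 0 ≤ f.eval x) → f ≠ 0 → 0 < E f)

include hdeg hlead horth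

lemma aux_orth (N : ℕ) (f : ℝ[X]) (hf : f.degree < N) : E (p N * f) = 0 := by
  obtain ⟨c, rfl⟩ := aux_expand p hdeg hlead N f hf
  rw [Finset.mul_sum, map_sum]
  refine Finset.sum_eq_zero fun j hj => ?_
  rw [mul_smul_comm, map_smul, horth, if_neg (by simp at hj; omega)]
  simp

include hspos

lemma aux_nodiv (N : ℕ) (s : ℝ[X]) (hs : 0 < s.natDegree) (hd : s ∣ p N)
    (hnn : ∀ x ∈ Set.Icc (-M) M, 0 ≤ s.eval x) : False := by
  obtain ⟨r, hr⟩ := hd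
  have hpN : p N ≠ 0 := by
    intro h; have := hlead N; simp [h] at this
  have hs0 : s ≠ 0 := by rintro rfl; simp at hs
  have hr0 : r ≠ 0 := by rintro rfl; simp at hr; exact hpN hr
  have hdr : r.degree < N := by
    rw [degree_eq_natDegree hr0]
    have := hdeg N
    rw [hr, natDegree_mul hs0 hr0] at this
    exact_mod_cast (by omega)
  have h1 := aux_orth E p hdeg hlead horth N r hdr
  have h2 := hspos (p N * r) (by
    intro x hx
    rw [hr]
    simp only [eval_mul]
    have := hnn x hx
    nlinarith [mul_nonneg this (mul_self_nonneg (r.eval x))]) (mul_ne_zero hpN hr0)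
  linarith

lemma aux_splits (N : ℕ) : (p N).Splits := by
  rw [splits_iff_splits]
  right
  intro g hg hgd
  obtain ⟨z, hz⟩ := IsAlgClosed.exists_aeval_eq_zero ℂ g (degree_pos_of_irreducible hg).ne'
  by_cases him : z.im = 0
  · refine degree_eq_one_of_irreducible_of_root hg (x := z.re) ?_
    have hzz : z = ((z.re : ℝ) : ℂ) := by apply Complex.ext <;> simp [him]
    rw [hzz] at hz
    have : aeval ((z.re : ℝ) : ℂ) g = ((g.eval z.re : ℝ) : ℂ) := by
      have := aeval_algebraMap_apply ℂ z.re g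
      simpa using this
    rw [this] at hz
    exact_mod_cast hz
  · exfalso
    have h := (g.quadratic_dvd_of_aeval_eq_zero_im_ne_zero hz him).trans hgd
    refine aux_nodiv E M p hdeg hlead horth hspos N _ ?_ h ?_
    · have : (X ^ 2 - C (2 * z.re) * X + C (‖z‖ ^ 2) : ℝ[X]).natDegree = 2 := by
        compute_degree!
      omega
    · intro x _
      simp only [eval_add, eval_sub, eval_pow, eval_X, eval_mul, eval_C]
      have : ‖z‖ ^ 2 = z.re ^ 2 + z.im ^ 2 := by
        rw [Complex.sq_norm, Complex.normSq_apply]; ring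
      rw [this]
      nlinarith [sq_nonneg (x - z.re), sq_nonneg z.im]

lemma aux_nodup (N : ℕ) : (p N).roots.Nodup := by
  have hpN : p N ≠ 0 := by
    intro h; have := hlead N; simp [h] at this
  classical
  rw [Multiset.nodup_iff_count_le_one]
  intro a
  by_contra! h
  rw [count_roots] at h
  have h2 : (X - C a) ^ 2 ∣ p N := (le_rootMultiplicity_iff hpN).1 h
  refine aux_nodiv E M p hdeg hlead horth hspos N _ ?_ h2 ?_
  · rw [natDegree_pow, natDegree_X_sub_C]; norm_num
  · intro x _
    simp only [eval_pow]
    positivity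

lemma aux_mem (N : ℕ) (a : ℝ) (ha : a ∈ (p N).roots) : a ∈ Set.Icc (-M) M := by
  have h := (mem_roots'.1 ha).2
  rw [← dvd_iff_isRoot] at h
  constructor
  · by_contra! h'
    refine aux_nodiv E M p hdeg hlead horth hspos N _ ?_ h ?_
    · simp
    · intro x hx
      simp
      linarith [hx.1]
  · by_contra! h'
    refine aux_nodiv E M p hdeg hlead horth hspos N (-(X - C a)) ?_ ((neg_dvd).2 h) ?_
    · rw [natDegree_neg]; simp
    · intro x hx
      simp
      linarith [hx.2]

lemma aux_card (N : ℕ) : (p N).roots.toFinset.card = N := by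
  rw [Multiset.toFinset_card_of_nodup (aux_nodup E M p hdeg hlead horth hspos N),
    splits_iff_card_roots.1 (aux_splits E M p hdeg hlead horth hspos N), hdeg]

lemma aux_quad (N : ℕ) (f : ℝ[X]) (hf : f.degree < (2 * N : ℕ)) :
    E f = ∑ i ∈ (p N).roots.toFinset,
      E (Lagrange.basis (p N).roots.toFinset id i) * f.eval i := by
  have hpN : p N ≠ 0 := by
    intro h; have := hlead N; simp [h] at this
  have hdN : (p N).degree = N := by rw [degree_eq_natDegree hpN, hdeg]
  have hcard := aux_card E M p hdeg hlead horth hspos N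
  have hdec := EuclideanDomain.div_add_mod f (p N)
  have hmod : (f % p N).degree < (N : ℕ) := by
    rw [← hdN]; exact degree_mod_lt f hpN
  have hdiv : (f / p N).degree < (N : ℕ) := by
    by_cases h : (p N).degree ≤ f.degree
    · have := degree_add_div hpN h
      rw [hdN] at this
      by_cases h0 : f / p N = 0
      · rw [h0, degree_zero]; exact WithBot.bot_lt_coe _
      · rw [← this, degree_eq_natDegree h0] at hf
        rw [degree_eq_natDegree h0]
        have h3 : N + (f / p N).natDegree < 2 * N := by exact_mod_cast hf
        exact_mod_cast (by omega)
    · rw [(Polynomial.div_eq_zero_iff hpN).2 (not_le.1 h), degree_zero]; exact WithBot.bot_lt_coe _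
  have h1 : E f = E (f % p N) := by
    conv_lhs => rw [← hdec]
    rw [map_add, aux_orth E p hdeg hlead horth N _ hdiv, zero_add]
  rw [h1]
  have hev : ∀ i ∈ (p N).roots.toFinset, (f % p N).eval i = f.eval i := by
    intro i hi
    have hi' : (p N).eval i = 0 := by
      simpa using (mem_roots'.1 (Multiset.mem_toFinset.1 hi)).2
    conv_rhs => rw [← hdec]
    simp [hi']
  have h2 := Lagrange.eq_interpolate_of_eval_eq (s := (p N).roots.toFinset) (v := id)
    (f := f % p N) (fun i => f.eval i) (Set.injOn_id _) (by rw [hcard]; exact hmod) hev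
  rw [h2, Lagrange.interpolate_apply, map_sum]
  refine Finset.sum_congr rfl fun i _ => ?_
  rw [← smul_eq_C_mul, map_smul, smul_eq_mul, mul_comm]

lemma aux_wnonneg (N : ℕ) (i : ℝ) (hi : i ∈ (p N).roots.toFinset) :
    0 ≤ E (Lagrange.basis (p N).roots.toFinset id i) := by
  have hcard := aux_card E M p hdeg hlead horth hspos N
  have hN : 0 < N := by rw [← hcard]; exact Finset.card_pos.2 ⟨i, hi⟩
  set L := Lagrange.basis (p N).roots.toFinset id i with hL
  have hL0 : L ≠ 0 := Lagrange.basis_ne_zero (Set.injOn_id _) hi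
  have hd : L.natDegree = N - 1 := by
    rw [hL, Lagrange.natDegree_basis (Set.injOn_id _) hi, hcard]
  have h := aux_quad E M p hdeg hlead horth hspos N (L * L) (by
    rw [degree_eq_natDegree (mul_ne_zero hL0 hL0), natDegree_mul hL0 hL0, hd]
    exact_mod_cast (by omega))
  rw [Finset.sum_eq_single i] at h
  · have h1 : L.eval i = 1 := Lagrange.eval_basis_self (v := id) (Set.injOn_id _) hi
    rw [eval_mul, h1, mul_one, mul_one] at h
    rw [← hL] at h
    rw [← h]
    exact (hspos _ (fun x _ => by rw [eval_mul]; exact mul_self_nonneg _)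
      (mul_ne_zero hL0 hL0)).le
  · intro j hj hji
    have : L.eval j = 0 := Lagrange.eval_basis_of_ne (v := id) (Ne.symm hji) hj
    simp [this]
  · intro h; exact absurd hi h

lemma aux_christoffel (N : ℕ) (i : ℝ) (hi : i ∈ (p N).roots.toFinset) :
    ∑ j ∈ Finset.range N,
      E (Lagrange.basis (p N).roots.toFinset id i) * (p j).eval i ^ 2 = 1 := by
  have hcard := aux_card E M p hdeg hlead horth hspos N
  have hN : 0 < N := by rw [← hcard]; exact Finset.card_pos.2 ⟨i, hi⟩
  set L := Lagrange.basis (p N).roots.toFinset id i with hL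
  have hL0 : L ≠ 0 := Lagrange.basis_ne_zero (Set.injOn_id _) hi
  have hd : L.natDegree = N - 1 := by
    rw [hL, Lagrange.natDegree_basis (Set.injOn_id _) hi, hcard]
  have h1 : L.eval i = 1 := Lagrange.eval_basis_self (v := id) (Set.injOn_id _) hi
  obtain ⟨c, hc⟩ := aux_expand p hdeg hlead N L (by
    rw [degree_eq_natDegree hL0, hd]; exact_mod_cast (by omega))
  have hcj : ∀ j ∈ Finset.range N, c j = E L * (p j).eval i := by
    intro j hj
    have hpj : p j ≠ 0 := by
      intro h; have := hlead j; simp [h] at this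
    have e1 : E (L * p j) = c j := by
      rw [hc, Finset.sum_mul, map_sum, Finset.sum_eq_single j]
      · rw [smul_mul_assoc, map_smul, horth]; simp
      · intro b _ hb
        rw [smul_mul_assoc, map_smul, horth, if_neg hb]; simp
      · intro h; exact absurd hj h
    rw [← e1, aux_quad E M p hdeg hlead horth hspos N (L * p j), Finset.sum_eq_single i]
    · rw [eval_mul, h1, one_mul]
    · intro b hb hbi
      have : L.eval b = 0 := Lagrange.eval_basis_of_ne (v := id) (Ne.symm hbi) hb
      simp [this]
    · intro h; exact absurd hi h
    · rw [degree_eq_natDegree (mul_ne_zero hL0 hpj), natDegree_mul hL0 hpj, hd, hdeg]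
      have := Finset.mem_range.1 hj
      exact_mod_cast (by omega)
  rw [← h1]
  conv_rhs => rw [hc]
  rw [eval_finset_sum]
  refine Finset.sum_congr rfl fun j hj => ?_
  rw [eval_smul, hcj j hj, smul_eq_mul]; ring

include hpos

lemma aux_main (k N : ℕ) :
    |E (X ^ k * ∑ j ∈ Finset.range N, p j ^ 2) - ∑ i ∈ (p N).roots.toFinset, i ^ k|
      ≤ k * (2 * |M| ^ k) := by
  set S := (p N).roots.toFinset with hS
  set w : ℝ → ℝ := fun i => E (Lagrange.basis S id i) with hw
  set d : ℕ → ℝ := fun j => E (X ^ k * p j ^ 2) - ∑ i ∈ S, w i * (i ^ k * (p j).eval i ^ 2)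
  have hp0 : ∀ j, p j ≠ 0 := by
    intro j h; have := hlead j; simp [h] at this
  have hE1 : ∀ j, E (p j ^ 2) = 1 := fun j => by rw [sq, horth, if_pos rfl]
  have hxk : ∀ x ∈ Set.Icc (-M) M, |x ^ k| ≤ |M| ^ k := by
    intro x hx
    rw [abs_pow]
    refine pow_le_pow_left₀ (abs_nonneg _) ?_ k
    exact (abs_le.2 hx).trans (le_abs_self M)
  have hsum : E (X ^ k * ∑ j ∈ Finset.range N, p j ^ 2) - ∑ i ∈ S, i ^ k
      = ∑ j ∈ Finset.range N, d j := by
    rw [Finset.sum_sub_distrib, Finset.mul_sum, map_sum]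
    congr 1
    rw [Finset.sum_comm]
    refine Finset.sum_congr rfl fun i hi => ?_
    have := aux_christoffel E M p hdeg hlead horth hspos N i hi
    rw [← hS] at this
    calc i ^ k = i ^ k * ∑ j ∈ Finset.range N, w i * (p j).eval i ^ 2 := by rw [this, mul_one]
      _ = _ := by
        rw [Finset.mul_sum]
        exact Finset.sum_congr rfl fun j _ => by ring
  have hz : ∀ j ∈ Finset.range N, ¬ (N ≤ j + k) → d j = 0 := by
    intro j hj hjk
    have := aux_quad E M p hdeg hlead horth hspos N (X ^ k * p j ^ 2) (by
      rw [degree_eq_natDegree (by simp [hp0 j]), natDegree_mul (by simp) (by simp [hp0 j]),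
        natDegree_pow, natDegree_pow, hdeg, natDegree_X]
      exact_mod_cast (by omega))
    simp only [d]
    rw [this, sub_eq_zero]
    refine Finset.sum_congr rfl fun i _ => ?_
    simp [hw, hS]
  have hb : ∀ j ∈ Finset.range N, |d j| ≤ 2 * |M| ^ k := by
    intro j hj
    have hj := Finset.mem_range.1 hj
    have b1 : |E (X ^ k * p j ^ 2)| ≤ |M| ^ k := by
      have h1 := hpos ((|M| ^ k) • p j ^ 2 - X ^ k * p j ^ 2) (by
        intro x hx
        have := (abs_le.1 (hxk x hx)).2
        simp only [eval_sub, eval_smul, eval_mul, eval_pow, eval_X, smul_eq_mul]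
        nlinarith [sq_nonneg ((p j).eval x)])
      have h2 := hpos ((|M| ^ k) • p j ^ 2 + X ^ k * p j ^ 2) (by
        intro x hx
        have := (abs_le.1 (hxk x hx)).1
        simp only [eval_add, eval_smul, eval_mul, eval_pow, eval_X, smul_eq_mul]
        nlinarith [sq_nonneg ((p j).eval x)])
      rw [map_sub, map_smul, hE1, smul_eq_mul, mul_one] at h1
      rw [map_add, map_smul, hE1, smul_eq_mul, mul_one] at h2
      rw [abs_le]; constructor <;> linarith
    have b2 : |∑ i ∈ S, w i * (i ^ k * (p j).eval i ^ 2)| ≤ |M| ^ k := by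
      have hq := aux_quad E M p hdeg hlead horth hspos N (p j ^ 2) (by
        rw [degree_eq_natDegree (by simp [hp0 j]), natDegree_pow, hdeg]
        exact_mod_cast (by omega))
      rw [hE1] at hq
      calc |∑ i ∈ S, w i * (i ^ k * (p j).eval i ^ 2)|
          ≤ ∑ i ∈ S, |w i * (i ^ k * (p j).eval i ^ 2)| := Finset.abs_sum_le_sum_abs _ _
        _ ≤ ∑ i ∈ S, |M| ^ k * (w i * (p j ^ 2).eval i) := by
          refine Finset.sum_le_sum fun i hi => ?_
          have hwi : 0 ≤ w i := aux_wnonneg E M p hdeg hlead horth hspos N i hi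
          have hi' := hxk i (aux_mem E M p hdeg hlead horth hspos N i (Multiset.mem_toFinset.1 hi))
          rw [abs_mul, abs_mul, abs_of_nonneg hwi, abs_of_nonneg (sq_nonneg ((p j).eval i)),
            eval_pow]
          have := mul_le_mul_of_nonneg_right hi' (mul_nonneg hwi (sq_nonneg ((p j).eval i)))
          linarith
        _ = |M| ^ k := by rw [← Finset.mul_sum, ← hq, mul_one]
    calc |d j| ≤ _ := abs_sub _ _
      _ ≤ 2 * |M| ^ k := by linarith
  rw [hsum]
  calc |∑ j ∈ Finset.range N, d j|
      = |∑ j ∈ (Finset.range N).filter (fun j => N ≤ j + k), d j| := by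
        rw [Finset.sum_filter_of_ne]
        intro j hj h
        by_contra h'
        exact h (hz j hj h')
    _ ≤ ∑ j ∈ (Finset.range N).filter (fun j => N ≤ j + k), |d j| :=
        Finset.abs_sum_le_sum_abs _ _
    _ ≤ ((Finset.range N).filter (fun j => N ≤ j + k)).card • (2 * |M| ^ k) :=
        Finset.sum_le_card_nsmul _ _ _ fun j hj => hb j (Finset.mem_filter.1 hj).1
    _ ≤ k * (2 * |M| ^ k) := by
        rw [nsmul_eq_mul]
        refine mul_le_mul_of_nonneg_right ?_ (by positivity)
        have : (Finset.range N).filter (fun j => N ≤ j + k) ⊆ Finset.Ico (N - k) N := by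
          intro j hj
          simp at hj ⊢
          omega
        have h := Finset.card_le_card this
        rw [Nat.card_Ico] at h
        exact_mod_cast (by omega)

end Algebraic

lemma aux_ae (μ : Measure ℝ) (M : ℝ) (hsupp : measSupport μ ⊆ Set.Icc (-M) M) :
    ∀ᵐ x ∂μ, x ∈ Set.Icc (-M) M := by
  rw [ae_iff]
  refine measure_null_of_locally_null _ fun x hx => ?_
  have hx' : x ∉ measSupport μ := fun h => hx (hsupp h)
  simp only [measSupport, Set.mem_setOf_eq, not_forall, not_not] at hx'
  obtain ⟨U, hU, hxU, h0⟩ := hx'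
  exact ⟨U, mem_nhdsWithin_of_mem_nhds (hU.mem_nhds hxU), h0⟩

lemma aux_int (μ : Measure ℝ) [IsProbabilityMeasure μ] (M : ℝ)
    (hsupp : measSupport μ ⊆ Set.Icc (-M) M) (f : ℝ[X]) :
    Integrable (fun x => f.eval x) μ := by
  obtain ⟨B, hB⟩ := isCompact_Icc.exists_bound_of_continuousOn (s := Set.Icc (-M) M)
    (f := fun x => f.eval x) f.continuous.continuousOn
  refine Integrable.of_bound f.continuous.aestronglyMeasurable B ?_
  filter_upwards [aux_ae μ M hsupp] with x hx using hB x hx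

lemma aux_strict (μ : Measure ℝ) [IsProbabilityMeasure μ] (M : ℝ)
    (hsupp : measSupport μ ⊆ Set.Icc (-M) M) (hinf : (measSupport μ).Infinite) (f : ℝ[X])
    (hf : ∀ x ∈ Set.Icc (-M) M, 0 ≤ f.eval x) (hf0 : f ≠ 0) : 0 < ∫ x, f.eval x ∂μ := by
  have hnn : 0 ≤ᵐ[μ] fun x => f.eval x := by
    filter_upwards [aux_ae μ M hsupp] with x hx using hf x hx
  refine lt_of_le_of_ne (integral_nonneg_of_ae hnn) fun h => ?_
  have h0 := (integral_eq_zero_iff_of_nonneg_ae hnn (aux_int μ M hsupp f)).1 h.symm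
  have h1 : μ {x | f.eval x ≠ 0} = 0 := by
    have := ae_iff.1 h0
    simpa using this
  apply hinf
  refine (f.roots.toFinset.finite_toSet).subset fun x hx => ?_
  by_contra hx'
  have hx2 : f.eval x ≠ 0 := by
    intro h; apply hx'; simp [hf0, h]
  exact hx {x | f.eval x ≠ 0} (isOpen_ne_fun f.continuous continuous_const) hx2 h1

noncomputable def auxE (μ : Measure ℝ) [IsProbabilityMeasure μ] (M : ℝ)
    (hsupp : measSupport μ ⊆ Set.Icc (-M) M) : ℝ[X] →ₗ[ℝ] ℝ where
  toFun f := ∫ x, f.eval x ∂μ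
  map_add' f g := by
    simp only [eval_add]
    exact integral_add (aux_int μ M hsupp f) (aux_int μ M hsupp g)
  map_smul' c f := by
    simp only [eval_smul, smul_eq_mul, RingHom.id_apply]
    exact integral_const_mul _ _

/-- **Simon's theorem, real line case.** For a probability measure `μ` on `ℝ`
with infinite support contained in `[-M, M]`, with orthonormal polynomials
`p n`, CD kernel `K_n(x,x) = ∑_{j≤n} p_j(x)²`, `dμ_n = (K_n(x,x)/(n+1)) dμ`,
and `ν_{n+1}` the normalized zero-counting measure of `p_{n+1}`, for every
fixed `k` there is a constant `C` (depending only on `k` and `μ`) such that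
the `k`-th moments of `μ_n` and `ν_{n+1}` differ by at most `C/(n+1)`. -/
theorem stmt_2
    (μ : Measure ℝ) [IsProbabilityMeasure μ] (M : ℝ)
    (hsupp : measSupport μ ⊆ Set.Icc (-M) M)
    (hinf : (measSupport μ).Infinite)
    (p : ℕ → Polynomial ℝ)
    (hdeg : ∀ n, (p n).natDegree = n)
    (hlead : ∀ n, 0 < (p n).leadingCoeff)
    (horth : ∀ n m, ∫ x, (p n).eval x * (p m).eval x ∂μ = if n = m then 1 else 0)
    (μn : ℕ → Measure ℝ)
    (hμn : ∀ n, μn n = μ.withDensity (fun x =>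
      ENNReal.ofReal ((∑ j ∈ Finset.range (n + 1), ((p j).eval x) ^ 2) / (n + 1))))
    (ν : ℕ → Measure ℝ)
    (hν : ∀ n, ν n = ((n : ℝ≥0∞) + 1)⁻¹ • (((p (n + 1)).roots).map Measure.dirac).sum)
    (k : ℕ) :
    ∃ C : ℝ, ∀ n : ℕ,
      |(∫ x, x ^ k ∂(μn n)) - ∫ x, x ^ k ∂(ν n)| ≤ C / (n + 1) := by
  refine ⟨k * (2 * |M| ^ k), fun n => ?_⟩
  have horth' : ∀ n m, auxE μ M hsupp (p n * p m) = if n = m then 1 else 0 := by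
    intro n m
    rw [← horth n m]
    simp [auxE]
  have hspos : ∀ f : ℝ[X], (∀ x ∈ Set.Icc (-M) M, 0 ≤ f.eval x) → f ≠ 0 →
      0 < auxE μ M hsupp f := fun f hf hf0 => aux_strict μ M hsupp hinf f hf hf0
  have hpos : ∀ f : ℝ[X], (∀ x ∈ Set.Icc (-M) M, 0 ≤ f.eval x) → 0 ≤ auxE μ M hsupp f := by
    intro f hf
    by_cases h0 : f = 0
    · simp [h0]
    · exact (hspos f hf h0).le
  have hmain := aux_main (auxE μ M hsupp) M p hdeg hlead horth' hpos hspos k (n + 1)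
  have hnd := aux_nodup (auxE μ M hsupp) M p hdeg hlead horth' hspos (n + 1)
  have hn : (0 : ℝ) < n + 1 := by positivity
  have e1 : ∫ x, x ^ k ∂(μn n)
      = auxE μ M hsupp (X ^ k * ∑ j ∈ Finset.range (n + 1), p j ^ 2) / (n + 1) := by
    rw [hμn, integral_withDensity_eq_integral_toReal_smul]
    · simp only [auxE, LinearMap.coe_mk, AddHom.coe_mk]
      rw [← integral_div]
      refine integral_congr_ae (Eventually.of_forall fun x => ?_)
      have : 0 ≤ (∑ j ∈ Finset.range (n + 1), ((p j).eval x) ^ 2) / ((n : ℝ) + 1) := by positivity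
      simp only [ENNReal.toReal_ofReal this, eval_mul, eval_pow, eval_X, eval_finset_sum,
        smul_eq_mul]
      ring
    · refine ENNReal.measurable_ofReal.comp (Continuous.measurable ?_)
      refine Continuous.div_const (continuous_finset_sum _ fun j _ => ?_) _
      exact (p j).continuous.pow 2
    · exact Eventually.of_forall fun x => ENNReal.ofReal_lt_top
  have e2 : ∫ x, x ^ k ∂(ν n) = (∑ i ∈ (p (n + 1)).roots.toFinset, i ^ k) / (n + 1) := by
    have : (((p (n + 1)).roots).map Measure.dirac).sum
        = ∑ i ∈ (p (n + 1)).roots.toFinset, Measure.dirac i := by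
      rw [Finset.sum, Multiset.toFinset_val, hnd.dedup]
    rw [hν, this, integral_smul_measure, integral_finset_sum_measure]
    · simp only [integral_dirac, smul_eq_mul]
      rw [ENNReal.toReal_inv, ENNReal.toReal_add (by simp) (by simp)]
      simp
      rw [inv_mul_eq_div]
    · intro i _
      exact integrable_dirac (by simp)
  rw [e1, e2, ← sub_div, abs_div, abs_of_pos hn]
  exact div_le_div_of_nonneg_right hmain hn.le
end

section
/- Let μ be a probability measure on ℝ with infinite compact support and orthonormal polynomials {p_n} with positive leading coefficients κ_n, and set a_{n+1} = κ_n/κ_{n+1}. Define dρ_n(x) = dx / (π (a_{n+1}² p_{n+1}(x)² + p_n(x)²)) on ℝ. Then ρ_n is a probability measure on ℝ and ∫_ℝ x^ℓ dρ_n(x) = ∫_ℝ x^ℓ dμ(x) for every integer ℓ with 0 ≤ ℓ ≤ 2n. -/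
open MeasureTheory Polynomial Filter
open scoped ENNReal Real

lemma aux_integrable (μ : Measure ℝ) [IsProbabilityMeasure μ]
    (hcomp : IsCompact (measSupport μ)) (f : ℝ → ℝ) (hf : Continuous f) : Integrable f μ := by
  have hnull : μ (measSupport μ)ᶜ = 0 := by
    refine measure_null_of_locally_null _ fun x hx => ?_
    simp only [measSupport, Set.mem_compl_iff, Set.mem_ofPred_eq, not_forall, not_not] at hx
    obtain ⟨U, hU, hxU, h0⟩ := hx
    exact ⟨U, mem_nhdsWithin_of_mem_nhds (hU.mem_nhds hxU), h0⟩
  have h : μ.restrict (measSupport μ) = μ := by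
    rw [Measure.restrict_eq_self_of_ae_mem]
    exact hnull
  have := hf.continuousOn.integrableOn_compact (μ := μ) hcomp
  rwa [IntegrableOn, h] at this

lemma aux_lower (E : ℂ[X]) (hE0 : E ≠ 0) (hE : ∀ z : ℂ, 0 ≤ z.im → E.eval z ≠ 0) :
    ∃ c : ℝ, 0 < c ∧ ∀ z : ℂ, 0 ≤ z.im → c * (1 + ‖z‖) ^ E.natDegree ≤ ‖E.eval z‖ := by
  have key : ∀ s : Multiset ℂ, (∀ w ∈ s, w.im < 0) → ∃ c : ℝ, 0 < c ∧ ∀ z : ℂ, 0 ≤ z.im →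
      c * (1 + ‖z‖) ^ s.card ≤ ‖(s.map (fun w => z - w)).prod‖ := by
    intro s
    induction s using Multiset.induction_on with
    | empty => intro _; exact ⟨1, one_pos, by simp⟩
    | cons w s ih =>
      intro h
      obtain ⟨c, hc, hcs⟩ := ih (fun w hw => h w (Multiset.mem_cons_of_mem hw))
      have hw : w.im < 0 := h w (Multiset.mem_cons_self w s)
      set K := (1 + ‖w‖) / (-w.im) + 1 with hK
      have hw' : 0 < -w.im := by linarith
      have hKp : 0 < K := by positivity
      refine ⟨K⁻¹ * c, by positivity, fun z hz => ?_⟩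
      have h1 : -w.im ≤ ‖z - w‖ := by
        have := Complex.abs_im_le_norm (z - w)
        have h2 := le_abs_self (z - w).im
        simp at h2 this
        linarith
      have h2 : ‖z‖ ≤ ‖z - w‖ + ‖w‖ := by
        have := norm_add_le (z - w) w
        simpa using this
      have h3 : 1 + ‖z‖ ≤ K * ‖z - w‖ := by
        have : (1 + ‖w‖) ≤ (1 + ‖w‖) / (-w.im) * ‖z - w‖ := by
          rw [div_mul_eq_mul_div, le_div_iff₀ hw']
          gcongr
        rw [hK]; linarith
      have h4 : K⁻¹ * (1 + ‖z‖) ≤ ‖z - w‖ := by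
        rw [inv_mul_le_iff₀ hKp]; exact h3
      rw [Multiset.map_cons, Multiset.prod_cons, norm_mul, Multiset.card_cons, pow_succ]
      calc K⁻¹ * c * ((1 + ‖z‖) ^ s.card * (1 + ‖z‖))
          = (K⁻¹ * (1 + ‖z‖)) * (c * (1 + ‖z‖) ^ s.card) := by ring
        _ ≤ _ := by
          gcongr
          exact hcs z hz
  obtain ⟨c, hc, h⟩ := key E.roots (fun w hw => by
    by_contra hcon
    push Not at hcon
    exact hE w hcon ((mem_roots hE0).1 hw))
  refine ⟨‖E.leadingCoeff‖ * c, mul_pos (by simpa using hE0) hc, fun z hz => ?_⟩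
  rw [(IsAlgClosed.splits E).eval_eq_prod_roots, (IsAlgClosed.splits E).natDegree_eq_card_roots,
    norm_mul, mul_assoc]
  gcongr
  exact h z hz

lemma aux_upper (f : ℂ[X]) (m : ℕ) (hm : f.natDegree ≤ m) :
    ∃ C : ℝ, 0 < C ∧ ∀ z : ℂ, ‖f.eval z‖ ≤ C * (1 + ‖z‖) ^ m := by
  refine ⟨∑ i ∈ Finset.range (f.natDegree + 1), ‖f.coeff i‖ + 1, by positivity, fun z => ?_⟩
  rw [eval_eq_sum_range]
  calc _ ≤ ∑ i ∈ Finset.range (f.natDegree + 1), ‖f.coeff i * z ^ i‖ := norm_sum_le _ _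
    _ ≤ ∑ i ∈ Finset.range (f.natDegree + 1), ‖f.coeff i‖ * (1 + ‖z‖) ^ m := by
      refine Finset.sum_le_sum fun i hi => ?_
      rw [norm_mul, norm_pow]
      have : i ≤ m := by rw [Finset.mem_range] at hi; omega
      gcongr
      calc ‖z‖ ^ i ≤ (1 + ‖z‖) ^ i := by gcongr; linarith
        _ ≤ _ := pow_le_pow_right₀ (by linarith [norm_nonneg z]) this
    _ ≤ _ := by
      rw [← Finset.sum_mul]
      gcongr
      linarith

lemma aux_contour (f E : ℂ[X]) (hE0 : E ≠ 0) (hE : ∀ z : ℂ, 0 ≤ z.im → E.eval z ≠ 0)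
    (hd : f.natDegree + 2 ≤ E.natDegree) :
    Integrable (fun x : ℝ => f.eval (x : ℂ) / E.eval (x : ℂ)) ∧
    ∫ x : ℝ, f.eval (x : ℂ) / E.eval (x : ℂ) = 0 := by
  obtain ⟨c, hc, hlow⟩ := aux_lower E hE0 hE
  obtain ⟨d, hd'⟩ := Nat.exists_eq_add_of_le' hd
  obtain ⟨C, hC, hup⟩ := aux_upper f (d + f.natDegree) (by omega)
  have hb : ∀ z : ℂ, 0 ≤ z.im → ‖f.eval z / E.eval z‖ ≤ (C / c) * ((1 + ‖z‖) ^ 2)⁻¹ := by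
    intro z hz
    have h1 := hlow z hz
    have hz0 : 0 < 1 + ‖z‖ := by positivity
    rw [norm_div]
    calc _ ≤ (C * (1 + ‖z‖) ^ (d + f.natDegree)) / (c * (1 + ‖z‖) ^ E.natDegree) := by
          gcongr
          exact hup z
      _ = _ := by
        rw [hd', ← add_assoc, pow_add _ _ 2]
        field_simp
  have hcont : Continuous (fun x : ℝ => f.eval (x : ℂ) / E.eval (x : ℂ)) := by
    refine Continuous.div ?_ ?_ (fun x => hE _ (by simp))
    · exact f.continuous.comp Complex.continuous_ofReal
    · exact E.continuous.comp Complex.continuous_ofReal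
  have hint : Integrable (fun x : ℝ => f.eval (x : ℂ) / E.eval (x : ℂ)) := by
    refine (integrable_inv_one_add_sq.const_mul (C / c)).mono' hcont.aestronglyMeasurable ?_
    refine Eventually.of_forall fun x => (hb x (by simp)).trans ?_
    gcongr
    have : ‖(x : ℂ)‖ = |x| := by simp
    rw [this, ← sq_abs x]
    nlinarith [abs_nonneg x]
  refine ⟨hint, ?_⟩
  have hlim := intervalIntegral_tendsto_integral hint tendsto_neg_atTop_atBot tendsto_id
  refine tendsto_nhds_unique hlim ?_
  have hbound : ∀ R : ℝ, 0 < R →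
      ‖∫ x in (-R)..R, f.eval (x : ℂ) / E.eval (x : ℂ)‖ ≤ 4 * (C / c) * R⁻¹ := by
    intro R hR
    have hrect := Complex.integral_boundary_rect_eq_zero_of_differentiableOn
      (fun z => f.eval z / E.eval z) (-R : ℝ) (R + R * Complex.I) (by
        intro z hz
        refine DifferentiableAt.differentiableWithinAt ?_
        refine DifferentiableAt.div f.differentiable.differentiableAt
          E.differentiable.differentiableAt (hE z ?_)
        have := hz.2
        simp [Set.uIcc_of_le hR.le] at this
        exact this.1)
    simp only [Complex.add_re, Complex.add_im, Complex.ofReal_re, Complex.ofReal_im,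
      Complex.mul_re, Complex.mul_im, Complex.I_re, Complex.I_im, mul_zero, mul_one, zero_mul,
      sub_zero, add_zero, zero_add, Complex.ofReal_zero] at hrect
    have hest : ∀ z : ℂ, 0 ≤ z.im → R ≤ ‖z‖ → ‖f.eval z / E.eval z‖ ≤ (C / c) * (R ^ 2)⁻¹ := by
      intro z hz hRz
      refine (hb z hz).trans ?_
      gcongr
      linarith
    have e1 := intervalIntegral.norm_integral_le_of_norm_le_const (a := -R) (b := R)
      (f := fun x : ℝ => f.eval ((x : ℂ) + R * Complex.I) / E.eval ((x : ℂ) + R * Complex.I))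
      (C := (C / c) * (R ^ 2)⁻¹) (fun x _ => hest _ (by simp [hR.le]) (by
        refine le_trans ?_ (Complex.abs_im_le_norm _)
        simp [le_abs_self]))
    have e2 := intervalIntegral.norm_integral_le_of_norm_le_const (a := 0) (b := R)
      (f := fun y : ℝ => f.eval ((R : ℂ) + y * Complex.I) / E.eval ((R : ℂ) + y * Complex.I))
      (C := (C / c) * (R ^ 2)⁻¹) (fun x hx => hest _ (by
          rw [Set.uIoc_of_le hR.le] at hx; simp [hx.1.le]) (by
        refine le_trans ?_ (Complex.abs_re_le_norm _)
        simp [le_abs_self]))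
    have e3 := intervalIntegral.norm_integral_le_of_norm_le_const (a := 0) (b := R)
      (f := fun y : ℝ => f.eval (((-R : ℝ) : ℂ) + y * Complex.I) /
        E.eval (((-R : ℝ) : ℂ) + y * Complex.I))
      (C := (C / c) * (R ^ 2)⁻¹) (fun x hx => hest _ (by
          rw [Set.uIoc_of_le hR.le] at hx; simp [hx.1.le]) (by
        refine le_trans ?_ (Complex.abs_re_le_norm _)
        simp [le_abs_self]))
    rw [smul_eq_mul, smul_eq_mul] at hrect
    generalize (∫ x in (-R)..R, f.eval ((x : ℂ) + R * Complex.I) /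
      E.eval ((x : ℂ) + R * Complex.I)) = A at *
    generalize (∫ y in (0:ℝ)..R, f.eval ((R : ℂ) + y * Complex.I) /
      E.eval ((R : ℂ) + y * Complex.I)) = B at *
    generalize (∫ y in (0:ℝ)..R, f.eval (((-R : ℝ) : ℂ) + y * Complex.I) /
        E.eval (((-R : ℝ) : ℂ) + y * Complex.I)) = D at *
    have : (∫ x in (-R)..R, f.eval (x : ℂ) / E.eval (x : ℂ)) =
        A - Complex.I * B + Complex.I * D := by linear_combination hrect
    rw [this]
    have n1 : ‖A - Complex.I * B + Complex.I * D‖ ≤ ‖A‖ + ‖B‖ + ‖D‖ := by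
      refine (norm_add_le _ _).trans ?_
      have := norm_sub_le A (Complex.I * B)
      simp only [norm_mul, Complex.norm_I, one_mul] at *
      linarith
    have hR2 : |R - -R| = 2 * R := by rw [abs_of_pos] <;> linarith
    have hR1 : |R - 0| = R := by rw [abs_of_pos] <;> linarith
    rw [hR2] at e1
    rw [hR1] at e2 e3
    have : 4 * (C / c) * R⁻¹ = C / c * (R ^ 2)⁻¹ * (2 * R) + C / c * (R ^ 2)⁻¹ * R
      + C / c * (R ^ 2)⁻¹ * R := by field_simp; ring
    linarith
  refine squeeze_zero_norm' (a := fun R : ℝ => 4 * (C / c) * R⁻¹) ?_ ?_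
  · filter_upwards [eventually_gt_atTop 0] with R hR
    exact hbound R hR
  · simpa using tendsto_inv_atTop_zero.const_mul (4 * (C / c))

lemma aux_orth_s7 (μ : Measure ℝ) [IsProbabilityMeasure μ]
    (hI : ∀ f : ℝ → ℝ, Continuous f → Integrable f μ)
    (p : ℕ → Polynomial ℝ)
    (hdeg : ∀ m, (p m).natDegree = m)
    (hlead : ∀ m, 0 < (p m).leadingCoeff)
    (horth : ∀ m l, ∫ x, (p m).eval x * (p l).eval x ∂μ = if m = l then 1 else 0) (m : ℕ) :
    ∀ N, N ≤ m → ∀ f : ℝ[X], f.degree < N → ∫ x, f.eval x * (p m).eval x ∂μ = 0 := by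
  intro N
  induction N with
  | zero =>
    intro _ f hf
    have : f = 0 := by
      rw [← degree_eq_bot]; simpa using hf
    simp [this]
  | succ N ih =>
    intro hN f hf
    have hpN : (p N).coeff N = (p N).leadingCoeff := by rw [leadingCoeff, hdeg]
    have hr : (f - C (f.coeff N / (p N).leadingCoeff) * p N).degree < N := by
      rw [degree_lt_iff_coeff_zero] at hf ⊢
      intro k hk
      rcases hk.eq_or_lt with rfl | hk
      · simp [hpN, (hlead N).ne']
      · have : (p N).coeff k = 0 := coeff_eq_zero_of_natDegree_lt (by rw [hdeg]; exact hk)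
        simp [this, hf k hk]
    have h1 := ih (by omega) _ hr
    have h2 : ∀ x, f.eval x * (p m).eval x =
        (f - C (f.coeff N / (p N).leadingCoeff) * p N).eval x * (p m).eval x
        + (f.coeff N / (p N).leadingCoeff) * ((p N).eval x * (p m).eval x) := by
      intro x; simp; ring
    simp_rw [h2]
    rw [integral_add (hI _ (by fun_prop)) (hI _ (by fun_prop)), h1, integral_const_mul, horth]
    simp [show N ≠ m by omega]

lemma aux_orth_lead (μ : Measure ℝ) [IsProbabilityMeasure μ]
    (hI : ∀ f : ℝ → ℝ, Continuous f → Integrable f μ)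
    (p : ℕ → Polynomial ℝ)
    (hdeg : ∀ m, (p m).natDegree = m)
    (hlead : ∀ m, 0 < (p m).leadingCoeff)
    (horth : ∀ m l, ∫ x, (p m).eval x * (p l).eval x ∂μ = if m = l then 1 else 0) (N : ℕ)
    (f : ℝ[X]) (hf : f.natDegree ≤ N) :
    ∫ x, f.eval x * (p N).eval x ∂μ = f.coeff N / (p N).leadingCoeff := by
  have hpN : (p N).coeff N = (p N).leadingCoeff := by rw [leadingCoeff, hdeg]
  have hr : (f - C (f.coeff N / (p N).leadingCoeff) * p N).degree < N := by
    rw [degree_lt_iff_coeff_zero]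
    intro k hk
    rcases hk.eq_or_lt with rfl | hk
    · simp [hpN, (hlead N).ne']
    · have : (p N).coeff k = 0 := coeff_eq_zero_of_natDegree_lt (by rw [hdeg]; exact hk)
      have h' : f.coeff k = 0 := coeff_eq_zero_of_natDegree_lt (by omega)
      simp [this, h']
  have h1 := aux_orth_s7 μ hI p hdeg hlead horth N N le_rfl _ hr
  have h2 : ∀ x, f.eval x * (p N).eval x =
      (f - C (f.coeff N / (p N).leadingCoeff) * p N).eval x * (p N).eval x
      + (f.coeff N / (p N).leadingCoeff) * ((p N).eval x * (p N).eval x) := by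
    intro x; simp; ring
  simp_rw [h2]
  rw [integral_add (hI _ (by fun_prop)) (hI _ (by fun_prop)), h1, integral_const_mul, horth]
  simp

lemma aux_reim (g : ℂ[X]) (n : ℕ) (hg : g.natDegree ≤ n) : ∃ u v : ℝ[X],
    u.natDegree ≤ n ∧ v.natDegree ≤ n ∧ u.coeff n = (g.coeff n).re ∧
    ∀ x : ℝ, g.eval (x : ℂ) = ((u.eval x : ℝ) : ℂ) + Complex.I * ((v.eval x : ℝ) : ℂ) := by
  refine ⟨∑ i ∈ Finset.range (n + 1), monomial i (g.coeff i).re,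
    ∑ i ∈ Finset.range (n + 1), monomial i (g.coeff i).im, ?_, ?_, ?_, ?_⟩
  · refine natDegree_sum_le_of_forall_le _ _ fun i hi => (natDegree_monomial_le _).trans ?_
    rw [Finset.mem_range] at hi; omega
  · refine natDegree_sum_le_of_forall_le _ _ fun i hi => (natDegree_monomial_le _).trans ?_
    rw [Finset.mem_range] at hi; omega
  · simp [coeff_monomial]
  · intro x
    rw [eval_eq_sum_range' (Nat.lt_succ_of_le hg)]
    simp only [eval_finsetSum, eval_monomial, Complex.ofReal_sum, Complex.ofReal_mul,
      Complex.ofReal_pow, Finset.mul_sum, ← Finset.sum_add_distrib]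
    refine Finset.sum_congr rfl fun i _ => ?_
    conv_lhs => rw [← Complex.re_add_im (g.coeff i)]
    ring

lemma aux_roots (μ : Measure ℝ) [IsProbabilityMeasure μ]
    (hI : ∀ f : ℝ → ℝ, Continuous f → Integrable f μ)
    (P Q : ℝ[X]) (n : ℕ) (hP : P.natDegree = n) (hQ : Q.natDegree = n + 1)
    (hQl : 0 < Q.coeff (n + 1))
    (hPo : ∀ f : ℝ[X], f.natDegree ≤ n → ∫ x, f.eval x * P.eval x ∂μ = f.coeff n / Q.coeff (n + 1))
    (hQo : ∀ f : ℝ[X], f.natDegree ≤ n → ∫ x, f.eval x * Q.eval x ∂μ = 0)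
    (z : ℂ) (hz : 0 ≤ z.im) :
    (Q.map Complex.ofRealHom + C Complex.I * P.map Complex.ofRealHom).eval z ≠ 0 := by
  intro h0
  set E := Q.map Complex.ofRealHom + C Complex.I * P.map Complex.ofRealHom with hE
  have hEd : E.natDegree ≤ n + 1 := by
    refine natDegree_add_le_of_degree_le ?_ ?_
    · exact natDegree_map_le.trans hQ.le
    · refine (natDegree_C_mul_le _ _).trans (natDegree_map_le.trans (by omega))
  have hEc : E.coeff (n + 1) = (Q.coeff (n + 1) : ℂ) := by
    have : P.coeff (n + 1) = 0 := coeff_eq_zero_of_natDegree_lt (by omega)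
    simp [hE, this]
  have hEne : E ≠ 0 := by
    intro h; rw [h] at hEc; simp at hEc; exact hQl.ne' (by exact_mod_cast hEc.symm)
  obtain ⟨g, hg⟩ := dvd_iff_isRoot.2 h0
  have hgne : g ≠ 0 := by rintro rfl; simp at hg; exact hEne hg
  have hgd : g.natDegree ≤ n := by
    rw [hg, natDegree_mul (X_sub_C_ne_zero z) hgne, natDegree_X_sub_C] at hEd
    omega
  have hgc : g.coeff n = (Q.coeff (n + 1) : ℂ) := by
    rw [← hEc, hg, sub_mul, coeff_sub, coeff_X_mul, coeff_C_mul,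
      coeff_eq_zero_of_natDegree_lt (show g.natDegree < n + 1 by omega)]
    simp
  obtain ⟨u, v, hu, hv, huc, huv⟩ := aux_reim g n hgd
  have hid : ∀ x : ℝ, u.eval x * P.eval x - v.eval x * Q.eval x =
      -z.im * (u.eval x ^ 2 + v.eval x ^ 2) := by
    intro x
    have h1 : E.eval (x : ℂ) = ((Q.eval x : ℝ) : ℂ) + Complex.I * ((P.eval x : ℝ) : ℂ) := by
      have e : ∀ F : ℝ[X], (F.map Complex.ofRealHom).eval (x : ℂ) = ((F.eval x : ℝ) : ℂ) := by
        intro F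
        exact eval_map_apply Complex.ofRealHom x
      simp only [hE, eval_add, eval_mul, eval_C, e]
    rw [hg, eval_mul, huv] at h1
    have hre := congrArg Complex.re h1
    have him := congrArg Complex.im h1
    simp at hre him
    rw [← hre, ← him]
    ring
  have h1 := hPo u hu
  have h2 := hQo v hv
  have h3 : ∫ x, (u.eval x * P.eval x - v.eval x * Q.eval x) ∂μ = 1 := by
    rw [integral_sub (hI _ (by fun_prop)) (hI _ (by fun_prop)), h1, h2, huc, hgc]
    simp [hQl.ne']
  simp_rw [hid] at h3
  rw [integral_const_mul] at h3
  have h4 : 0 ≤ ∫ x, (u.eval x ^ 2 + v.eval x ^ 2) ∂μ := integral_nonneg fun x => by positivity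
  nlinarith

lemma aux_rho (P Q : ℝ[X]) (n : ℕ) (hP : P.natDegree = n) (hQ : Q.natDegree = n + 1)
    (hQl : 0 < Q.coeff (n + 1))
    (hroot : ∀ z : ℂ, 0 ≤ z.im →
      (Q.map Complex.ofRealHom + C Complex.I * P.map Complex.ofRealHom).eval z ≠ 0)
    (hpos : ∀ x : ℝ, 0 < Q.eval x ^ 2 + P.eval x ^ 2)
    (f : ℝ[X]) (hf : f.natDegree ≤ n) :
    (Integrable (fun x => f.eval x * P.eval x / (Q.eval x ^ 2 + P.eval x ^ 2)) ∧
    ∫ x, f.eval x * P.eval x / (Q.eval x ^ 2 + P.eval x ^ 2) = π * (f.coeff n / Q.coeff (n + 1))) ∧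
    (f.coeff n = 0 →
      Integrable (fun x => f.eval x * Q.eval x / (Q.eval x ^ 2 + P.eval x ^ 2)) ∧
      ∫ x, f.eval x * Q.eval x / (Q.eval x ^ 2 + P.eval x ^ 2) = 0) := by
  set E := Q.map Complex.ofRealHom + C Complex.I * P.map Complex.ofRealHom with hE
  have e : ∀ (F : ℝ[X]) (x : ℝ), (F.map Complex.ofRealHom).eval (x : ℂ) = ((F.eval x : ℝ) : ℂ) := by
    intro F x
    exact eval_map_apply Complex.ofRealHom x
  have hPc : P.coeff (n + 1) = 0 := coeff_eq_zero_of_natDegree_lt (by omega)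
  have hEc : E.coeff (n + 1) = (Q.coeff (n + 1) : ℂ) := by
    simp [hE, hPc]
  have hEne : E ≠ 0 := by
    intro h; rw [h] at hEc; simp at hEc; exact hQl.ne' (by exact_mod_cast hEc.symm)
  have hEd' : E.natDegree ≤ n + 1 := by
    refine natDegree_add_le_of_degree_le ?_ ?_
    · exact natDegree_map_le.trans hQ.le
    · refine (natDegree_C_mul_le _ _).trans (natDegree_map_le.trans (by omega))
  have hEd : E.natDegree = n + 1 := by
    refine le_antisymm hEd' (le_natDegree_of_ne_zero ?_)
    rw [hEc]; exact_mod_cast hQl.ne'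
  set c : ℝ := f.coeff n / Q.coeff (n + 1) with hc
  have hYne : (X + C Complex.I : ℂ[X]) ≠ 0 := X_add_C_ne_zero _
  have hnum : (f.map Complex.ofRealHom * (X + C Complex.I) - C (c : ℂ) * E).natDegree ≤ n := by
    rw [natDegree_le_iff_coeff_eq_zero]
    intro k hk
    obtain ⟨k, rfl⟩ : ∃ j, k = j + 1 := ⟨k - 1, by omega⟩
    have hf0 : f.coeff (k + 1) = 0 := coeff_eq_zero_of_natDegree_lt (by omega)
    rw [coeff_sub, mul_add, coeff_add, coeff_mul_X, coeff_mul_C, coeff_C_mul, coeff_map, coeff_map,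
      hf0]
    rcases (Nat.lt_succ_iff.1 hk).eq_or_lt with rfl | hk'
    · rw [hEc, hc]
      have : (Q.coeff (n + 1) : ℂ) ≠ 0 := by exact_mod_cast hQl.ne'
      simp
      field_simp
      simp
    · have hE0 : E.coeff (k + 1) = 0 := coeff_eq_zero_of_natDegree_lt (by omega)
      have hf1 : f.coeff k = 0 := coeff_eq_zero_of_natDegree_lt (by omega)
      simp [hE0, hf1]
  obtain ⟨hGi, hG0⟩ := aux_contour (f.map Complex.ofRealHom * (X + C Complex.I) - C (c : ℂ) * E) ((X + C Complex.I) * E) (mul_ne_zero hYne hEne) (by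
    intro z hz
    rw [eval_mul]
    refine mul_ne_zero ?_ (hroot z hz)
    intro h
    have := congrArg Complex.im h
    simp at this
    linarith) (by
      rw [natDegree_mul hYne hEne, natDegree_X_add_C, hEd]
      exact (Nat.add_le_add_right hnum 2).trans (by omega))
  set G : ℝ → ℂ := fun x => (f.map Complex.ofRealHom * (X + C Complex.I) - C (c : ℂ) * E).eval (x : ℂ)
    / ((X + C Complex.I) * E).eval (x : ℂ) with hG
  have hGx : ∀ x : ℝ, G x = ((f.eval x * Q.eval x / (Q.eval x ^ 2 + P.eval x ^ 2)
        - c * x * (1 + x ^ 2)⁻¹ : ℝ) : ℂ)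
      + ((c * (1 + x ^ 2)⁻¹ - f.eval x * P.eval x / (Q.eval x ^ 2 + P.eval x ^ 2) : ℝ) : ℂ)
        * Complex.I := by
    intro x
    have hD := hpos x
    have hD' : (((Q.eval x : ℝ) : ℂ) ^ 2 + ((P.eval x : ℝ) : ℂ) ^ 2) ≠ 0 := by exact_mod_cast hD.ne'
    have hx' : (1 + (x : ℂ) ^ 2) ≠ 0 := by
      have : (1 + x ^ 2 : ℝ) ≠ 0 := by positivity
      exact_mod_cast this
    have hI2 := Complex.I_sq
    have f1 : (((Q.eval x : ℝ) : ℂ) ^ 2 + ((P.eval x : ℝ) : ℂ) ^ 2) =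
      (((Q.eval x : ℝ) : ℂ) + Complex.I * P.eval x) * (((Q.eval x : ℝ) : ℂ) - Complex.I * P.eval x) := by
      linear_combination ((P.eval x : ℝ) : ℂ) ^ 2 * hI2
    have f2 : (1 + (x : ℂ) ^ 2) = (x + Complex.I) * (x - Complex.I) := by
      linear_combination hI2
    have g1 := f1 ▸ hD'
    have g2 := f2 ▸ hx'
    have g3 := left_ne_zero_of_mul g1
    have g4 := right_ne_zero_of_mul g1
    have g5 := left_ne_zero_of_mul g2
    have g6 := right_ne_zero_of_mul g2
    simp only [hG, hE, eval_add, eval_sub, eval_mul, eval_C, eval_X, e]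
    push_cast
    rw [f1, f2]
    field_simp
    ring_nf
  have hre : ∀ x, (G x).re = f.eval x * Q.eval x / (Q.eval x ^ 2 + P.eval x ^ 2)
        - c * x * (1 + x ^ 2)⁻¹ := by
    intro x
    rw [hGx]; simp only [Complex.add_re, Complex.ofReal_re, Complex.re_ofReal_mul, Complex.I_re]; ring
  have him : ∀ x, (G x).im = c * (1 + x ^ 2)⁻¹
      - f.eval x * P.eval x / (Q.eval x ^ 2 + P.eval x ^ 2) := by
    intro x
    rw [hGx]; simp only [Complex.add_im, Complex.ofReal_im, Complex.im_ofReal_mul, Complex.I_im]; ring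
  have hGre : ∫ x, (G x).re = 0 := by
    have := integral_re hGi
    simp only [RCLike.re_eq_complex_re] at this
    rw [this, hG0]; simp
  have hGim : ∫ x, (G x).im = 0 := by
    have := integral_im hGi
    simp only [RCLike.im_eq_complex_im] at this
    rw [this, hG0]; simp
  have hci : Integrable (fun x : ℝ => c * (1 + x ^ 2)⁻¹) := integrable_inv_one_add_sq.const_mul c
  have hGii : Integrable (fun x => (G x).im) := hGi.im
  have hGri : Integrable (fun x => (G x).re) := hGi.re
  refine ⟨?_, ?_⟩
  · have heq : (fun x => f.eval x * P.eval x / (Q.eval x ^ 2 + P.eval x ^ 2)) =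
      fun x => c * (1 + x ^ 2)⁻¹ - (G x).im := by
      funext x; rw [him]; ring
    rw [heq]
    refine ⟨hci.sub hGii, ?_⟩
    rw [integral_sub hci hGii, hGim, integral_const_mul, integral_univ_inv_one_add_sq]
    ring
  · intro h0
    have hc0 : c = 0 := by rw [hc, h0, zero_div]
    have heq : (fun x => f.eval x * Q.eval x / (Q.eval x ^ 2 + P.eval x ^ 2)) =
      fun x => (G x).re := by
      funext x; rw [hre, hc0]; ring
    rw [heq]
    exact ⟨hGri, hGre⟩

lemma aux_bezout (P Q : ℝ[X]) (n : ℕ) (hP0 : P ≠ 0) (hP : P.natDegree = n)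
    (hQ : Q.natDegree = n + 1)
    (hco : IsCoprime P Q) (h : ℝ[X]) (hh : h.natDegree ≤ 2 * n) :
    ∃ f g : ℝ[X], h = f * P + g * Q ∧ f.natDegree ≤ n ∧ g.natDegree ≤ n ∧ g.coeff n = 0 := by
  obtain ⟨u, v, huv⟩ := hco
  have hmod := EuclideanDomain.div_add_mod (h * v) P
  have hdeg : ((h * v) % P).degree < n := by
    have := degree_mod_lt (h * v) hP0
    rwa [degree_eq_natDegree hP0, hP] at this
  set g := (h * v) % P with hg
  set f := h * u + (h * v / P) * Q with hf
  have hid : h = f * P + g * Q := by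
    rw [hf]; linear_combination (-h) * huv - Q * hmod
  refine ⟨f, g, hid, ?_, ?_, ?_⟩
  · by_cases hf0 : f = 0
    · simp [hf0]
    have h1 : (f * P).natDegree ≤ 2 * n := by
      rw [show f * P = h - g * Q by linear_combination -hid]
      refine natDegree_sub_le_of_le hh ?_ |>.trans (max_self _).le
      by_cases hg0 : g = 0
      · simp [hg0]
      · rw [degree_eq_natDegree hg0] at hdeg
        have : g.natDegree < n := by exact_mod_cast hdeg
        refine natDegree_mul_le.trans (by omega)
    rw [natDegree_mul hf0 hP0] at h1
    omega
  · exact natDegree_le_of_degree_le hdeg.le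
  · exact (degree_lt_iff_coeff_zero _ _).1 hdeg n le_rfl

theorem stmt_7
    (μ : Measure ℝ) [IsProbabilityMeasure μ]
    (hcomp : IsCompact (measSupport μ))
    (hinf : (measSupport μ).Infinite)
    (p : ℕ → Polynomial ℝ)
    (hdeg : ∀ m, (p m).natDegree = m)
    (hlead : ∀ m, 0 < (p m).leadingCoeff)
    (horth : ∀ m l, ∫ x, (p m).eval x * (p l).eval x ∂μ = if m = l then 1 else 0)
    (n : ℕ) (a : ℝ)
    (ha : a = (p n).leadingCoeff / (p (n + 1)).leadingCoeff)
    (ρ : Measure ℝ)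
    (hρ : ρ = volume.withDensity (fun x => ENNReal.ofReal
      ((π * (a ^ 2 * ((p (n + 1)).eval x) ^ 2 + ((p n).eval x) ^ 2))⁻¹))) :
    IsProbabilityMeasure ρ ∧
    ∀ ℓ : ℕ, ℓ ≤ 2 * n → ∫ x, x ^ ℓ ∂ρ = ∫ x, x ^ ℓ ∂μ := by
  have hI := aux_integrable μ hcomp
  have hapos : 0 < a := by rw [ha]; exact div_pos (hlead _) (hlead _)
  set P := p n with hPdef
  obtain ⟨Q, hQdef⟩ : ∃ Q, Q = C a * p (n + 1) := ⟨_, rfl⟩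
  have hP : P.natDegree = n := hdeg n
  have hQ : Q.natDegree = n + 1 := by rw [hQdef, natDegree_C_mul hapos.ne', hdeg]
  have hQc : Q.coeff (n + 1) = P.leadingCoeff := by
    have : (p (n + 1)).coeff (n + 1) = (p (n + 1)).leadingCoeff := by rw [leadingCoeff, hdeg]
    rw [hQdef, coeff_C_mul, this, ha, div_mul_cancel₀ _ (hlead _).ne']
  have hQl : 0 < Q.coeff (n + 1) := by rw [hQc]; exact hlead n
  have hP0 : P ≠ 0 := by
    intro h; have := hlead n; rw [← hPdef, h] at this; simp at this
  have hQe : ∀ x, Q.eval x = a * (p (n + 1)).eval x := fun x => by simp [hQdef]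
  have hPo : ∀ f : ℝ[X], f.natDegree ≤ n →
      ∫ x, f.eval x * P.eval x ∂μ = f.coeff n / Q.coeff (n + 1) := by
    intro f hf
    rw [hQc]
    exact aux_orth_lead μ hI p hdeg hlead horth n f hf
  have hQo : ∀ f : ℝ[X], f.natDegree ≤ n → ∫ x, f.eval x * Q.eval x ∂μ = 0 := by
    intro f hf
    have h1 := aux_orth_s7 μ hI p hdeg hlead horth (n + 1) (n + 1) le_rfl f
      (degree_le_natDegree.trans_lt (by exact_mod_cast Nat.lt_succ_of_le hf))
    have h2 : ∀ x, f.eval x * Q.eval x = a * (f.eval x * (p (n + 1)).eval x) := by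
      intro x; rw [hQe]; ring
    simp_rw [h2]
    rw [integral_const_mul, h1, mul_zero]
  have hroot := aux_roots μ hI P Q n hP hQ hQl hPo hQo
  have e : ∀ (F : ℝ[X]) (z : ℂ), (F.map Complex.ofRealHom).eval z = aeval z F := by
    intro F z
    rw [eval_map, aeval_def]; rfl
  have hco : IsCoprime P Q := by
    rw [isCoprime_iff_aeval_ne_zero_of_isAlgClosed ℝ ℂ]
    have main : ∀ z : ℂ, 0 ≤ z.im → aeval z P ≠ 0 ∨ aeval z Q ≠ 0 := by
      intro z hz
      by_contra hcon
      push Not at hcon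
      apply hroot z hz
      simp [e, hcon.1, hcon.2, -eval_map_algebraMap]
    intro z
    rcases le_total 0 z.im with hz | hz
    · exact main z hz
    · have := main ((starRingEnd ℂ) z) (by simpa using hz)
      rw [aeval_conj, aeval_conj] at this
      simpa using this
  have hpos : ∀ x : ℝ, 0 < Q.eval x ^ 2 + P.eval x ^ 2 := by
    intro x
    by_contra hcon
    have h1 : Q.eval x = 0 := by nlinarith [sq_nonneg (Q.eval x), sq_nonneg (P.eval x)]
    have h2 : P.eval x = 0 := by nlinarith [sq_nonneg (Q.eval x), sq_nonneg (P.eval x)]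
    obtain ⟨u, v, huv⟩ := hco
    have := congrArg (eval x) huv
    simp [h1, h2] at this
  have hmom : ∀ ℓ : ℕ, ℓ ≤ 2 * n →
      Integrable (fun x : ℝ => x ^ ℓ / (Q.eval x ^ 2 + P.eval x ^ 2)) ∧
      ∫ x : ℝ, x ^ ℓ / (Q.eval x ^ 2 + P.eval x ^ 2) = π * ∫ x, x ^ ℓ ∂μ := by
    intro ℓ hℓ
    obtain ⟨f, g, hfg, hf, hg, hgc⟩ := aux_bezout P Q n hP0 hP hQ hco (X ^ ℓ)
      (by simpa using hℓ)
    have hx : ∀ x : ℝ, x ^ ℓ = f.eval x * P.eval x + g.eval x * Q.eval x := by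
      intro x
      have := congrArg (eval x) hfg
      simpa using this
    obtain ⟨⟨i1, v1⟩, -⟩ := aux_rho P Q n hP hQ hQl hroot hpos f hf
    obtain ⟨i2, v2⟩ := (aux_rho P Q n hP hQ hQl hroot hpos g hg).2 hgc
    simp_rw [hx, add_div]
    refine ⟨i1.add i2, ?_⟩
    rw [integral_add i1 i2, v1, v2, integral_add (hI _ (by fun_prop)) (hI _ (by fun_prop)),
      hPo f hf, hQo g hg]
    ring
  have hdens : ∀ x : ℝ, (π * (a ^ 2 * ((p (n + 1)).eval x) ^ 2 + (P.eval x) ^ 2))⁻¹ =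
      π⁻¹ * (1 / (Q.eval x ^ 2 + P.eval x ^ 2)) := by
    intro x; rw [hQe, mul_inv, one_div, mul_pow]
  simp_rw [hdens] at hρ
  have hnn : ∀ x : ℝ, 0 ≤ π⁻¹ * (1 / (Q.eval x ^ 2 + P.eval x ^ 2)) := by
    intro x; have := hpos x; positivity
  have hmeas : Measurable (fun x : ℝ => π⁻¹ * (1 / (Q.eval x ^ 2 + P.eval x ^ 2))) := by
    have h1 : Measurable (fun x => Q.eval x) := Q.continuous.measurable
    have h2 : Measurable (fun x => P.eval x) := P.continuous.measurable
    fun_prop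
  refine ⟨⟨?_⟩, ?_⟩
  · obtain ⟨i0, v0⟩ := hmom 0 (by omega)
    simp only [pow_zero, integral_const, probReal_univ, smul_eq_mul, mul_one] at i0 v0
    rw [hρ, withDensity_apply _ MeasurableSet.univ, Measure.restrict_univ,
      ← ofReal_integral_eq_lintegral_ofReal (i0.const_mul _) (Eventually.of_forall hnn),
      integral_const_mul, v0, inv_mul_cancel₀ Real.pi_ne_zero, ENNReal.ofReal_one]
  · intro ℓ hℓ
    obtain ⟨i, v⟩ := hmom ℓ hℓ
    rw [hρ, integral_withDensity_eq_integral_toReal_smul hmeas.ennreal_ofReal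
      (Eventually.of_forall fun x => ENNReal.ofReal_lt_top)]
    have : ∀ x : ℝ, (ENNReal.ofReal (π⁻¹ * (1 / (Q.eval x ^ 2 + P.eval x ^ 2)))).toReal • x ^ ℓ
        = π⁻¹ * (x ^ ℓ / (Q.eval x ^ 2 + P.eval x ^ 2)) := by
      intro x
      rw [ENNReal.toReal_ofReal (hnn x), smul_eq_mul]; ring
    simp_rw [this]
    rw [integral_const_mul, v, inv_mul_cancel_left₀ Real.pi_ne_zero]
end

section
/- Let μ be a probability measure on ℝ with infinite support contained in [−M, M], with orthonormal polynomials {p_n}, CD kernel K_n, a_{n+1} = κ_n/κ_{n+1}, and dρ_n(x) = dx/(π(a_{n+1}² p_{n+1}(x)² + p_n(x)²)). Then for every k ∈ ℕ and all n ≥ k, ∫_{|x| > M+1} |x|^k K_{n−k}(x, x; μ) dρ_n(x) ≤ M^{2k}/(M+1)^k; in particular this integral is bounded uniformly in n. -/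
open MeasureTheory Polynomial Filter
open scoped ENNReal Real

section AlgHelpers

lemma h_degree {p : ℕ → Polynomial ℝ} (hdeg : ∀ m, (p m).natDegree = m)
    (hlead : ∀ m, 0 < (p m).leadingCoeff) (m : ℕ) : (p m).degree = m := by
  have h0 : p m ≠ 0 := by
    intro h
    have := hlead m
    simp [h] at this
  rw [Polynomial.degree_eq_natDegree h0, hdeg]

lemma h_sub_degree {q r : Polynomial ℝ} {m : ℕ} (hq : q.degree = m) (hr : r.degree ≤ m) :
    (r - (r.coeff m / q.leadingCoeff) • q).degree < m := by
  rw [Polynomial.degree_lt_iff_coeff_zero]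
  intro i hi
  have hq0 : q ≠ 0 := by
    rintro rfl
    simp at hq
  have hn : q.natDegree = m := Polynomial.natDegree_eq_of_degree_eq_some hq
  rcases Nat.eq_or_lt_of_le hi with h | h
  · subst h
    have : q.leadingCoeff ≠ 0 := by simpa using hq0
    have h2 : q.coeff m = q.leadingCoeff := by rw [← hn]; rfl
    simp [h2]
    field_simp
    simp
  · have h1 : r.coeff i = 0 := Polynomial.coeff_eq_zero_of_degree_lt
      (lt_of_le_of_lt hr (by exact_mod_cast h))
    have h2 : q.coeff i = 0 := Polynomial.coeff_eq_zero_of_degree_lt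
      (by rw [hq]; exact_mod_cast h)
    simp [h1, h2]

lemma h_expand {p : ℕ → Polynomial ℝ} (hd : ∀ m, (p m).degree = m) (n : ℕ) :
    ∀ r : Polynomial ℝ, r.degree < n → ∃ c : ℕ → ℝ, r = ∑ j ∈ Finset.range n, c j • p j := by
  induction n with
  | zero =>
    intro r hr
    refine ⟨0, ?_⟩
    simpa [Polynomial.degree_eq_bot, Nat.WithBot.lt_zero_iff] using hr
  | succ m ih =>
    intro r hr
    have hr' : r.degree ≤ m := by
      refine Polynomial.degree_le_iff_coeff_zero _ _ |>.2 fun i hi => ?_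
      refine Polynomial.degree_lt_iff_coeff_zero _ _ |>.1 hr i ?_
      have : m < i := by exact_mod_cast hi
      omega
    obtain ⟨c, hc⟩ := ih _ (h_sub_degree (hd m) hr')
    refine ⟨Function.update c m (r.coeff m / (p m).leadingCoeff), ?_⟩
    rw [Finset.sum_range_succ, Function.update_self, sub_eq_iff_eq_add.1 hc]
    congr 1
    · refine Finset.sum_congr rfl fun j hj => ?_
      rw [Function.update_of_ne (by have := Finset.mem_range.1 hj; omega)]
    · rw [← sub_eq_iff_eq_add.1 hc]

variable {p : ℕ → Polynomial ℝ} {L : Polynomial ℝ →ₗ[ℝ] ℝ}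

lemma h_coef (ho : ∀ m l, L (p m * p l) = if m = l then 1 else 0) (c : ℕ → ℝ) (n i : ℕ) :
    L ((∑ j ∈ Finset.range n, c j • p j) * p i) = if i < n then c i else 0 := by
  simp [Finset.sum_mul, ho]

lemma h_orth (hd : ∀ m, (p m).degree = m)
    (ho : ∀ m l, L (p m * p l) = if m = l then 1 else 0) {r : Polynomial ℝ} {n i : ℕ}
    (hr : r.degree < n) (hi : n ≤ i) : L (r * p i) = 0 := by
  obtain ⟨c, rfl⟩ := h_expand hd n r hr
  rw [h_coef ho, if_neg (by omega)]

lemma h_repr (hd : ∀ m, (p m).degree = m)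
    (ho : ∀ m l, L (p m * p l) = if m = l then 1 else 0) {r : Polynomial ℝ} {n : ℕ}
    (hr : r.degree < n) : r = ∑ j ∈ Finset.range n, L (r * p j) • p j := by
  obtain ⟨c, rfl⟩ := h_expand hd n r hr
  refine Finset.sum_congr rfl fun j hj => ?_
  rw [h_coef ho, if_pos (Finset.mem_range.1 hj)]

lemma h_sq (ho : ∀ m l, L (p m * p l) = if m = l then 1 else 0) (c : ℕ → ℝ) (n : ℕ) :
    L ((∑ j ∈ Finset.range n, c j • p j) ^ 2) = ∑ j ∈ Finset.range n, c j ^ 2 := by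
  rw [pow_two]
  nth_rewrite 2 [Finset.sum_congr rfl (fun j _ => rfl)]
  rw [Finset.mul_sum, map_sum]
  refine Finset.sum_congr rfl fun j hj => ?_
  rw [mul_smul_comm, map_smul, h_coef ho, if_pos (Finset.mem_range.1 hj), smul_eq_mul, pow_two]

/-- Cauchy-Schwarz evaluation bound -/
lemma h_cs (hd : ∀ m, (p m).degree = m)
    (ho : ∀ m l, L (p m * p l) = if m = l then 1 else 0) {r : Polynomial ℝ} {n : ℕ}
    (hr : r.degree < n) (x : ℝ) :
    (r.eval x) ^ 2 ≤ L (r ^ 2) * ∑ j ∈ Finset.range n, ((p j).eval x) ^ 2 := by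
  obtain ⟨c, rfl⟩ := h_expand hd n r hr
  rw [h_sq ho, Polynomial.eval_finsetSum]
  simp only [Polynomial.eval_smul, smul_eq_mul]
  exact Finset.sum_mul_sq_le_sq_mul_sq _ _ _

lemma h_Xsub (hd : ∀ m, (p m).degree = m) (m : ℕ) :
    (X * p m - ((p m).leadingCoeff / (p (m+1)).leadingCoeff) • p (m+1)).degree
      < ((m + 1 : ℕ) : WithBot ℕ) := by
  have h1 : (X * p m).degree ≤ ((m + 1 : ℕ) : WithBot ℕ) := by
    rw [Polynomial.degree_mul, Polynomial.degree_X, hd]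
    push_cast; rw [add_comm]
  have h2 := h_sub_degree (hd (m+1)) h1
  have h3 : (X * p m).coeff (m+1) = (p m).leadingCoeff := by
    rw [Polynomial.coeff_X_mul, Polynomial.leadingCoeff,
      Polynomial.natDegree_eq_of_degree_eq_some (hd m)]
  rwa [h3] at h2

lemma h_rec (hd : ∀ m, (p m).degree = m)
    (ho : ∀ m l, L (p m * p l) = if m = l then 1 else 0) (m : ℕ) :
    ∃ b : ℝ, X * p (m+1) = ((p (m+1)).leadingCoeff / (p (m+2)).leadingCoeff) • p (m+2)
      + b • p (m+1) + ((p m).leadingCoeff / (p (m+1)).leadingCoeff) • p m := by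
  have h := h_repr hd ho (h_Xsub hd (m+1))
  rw [Finset.sum_range_succ, Finset.sum_range_succ] at h
  set r := X * p (m+1) - ((p (m+1)).leadingCoeff / (p (m+1+1)).leadingCoeff) • p (m+1+1) with hr
  have hL : ∀ j, j ≤ m → L (r * p j) = L (X * p j * p (m+1)) := by
    intro j hj
    rw [hr, sub_mul, map_sub, smul_mul_assoc, map_smul, ho, if_neg (by omega)]
    simp only [smul_zero, sub_zero]
    congr 1; ring
  have h0 : ∑ j ∈ Finset.range m, L (r * p j) • p j = 0 := by
    refine Finset.sum_eq_zero fun j hj => ?_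
    have hj := Finset.mem_range.1 hj
    rw [hL j hj.le, h_orth hd ho (n := m + 1) _ le_rfl, zero_smul]
    rw [Polynomial.degree_mul, Polynomial.degree_X, hd]
    have : 1 + j < m + 1 := by omega
    exact_mod_cast this
  have h1 : L (r * p m) = (p m).leadingCoeff / (p (m+1)).leadingCoeff := by
    rw [hL m le_rfl]
    have := h_orth hd ho (h_Xsub hd m) le_rfl
    rw [sub_mul, map_sub, smul_mul_assoc, map_smul, ho, if_pos rfl, smul_eq_mul, mul_one] at this
    linarith
  rw [h0, zero_add, h1] at h
  refine ⟨L (r * p (m+1)), ?_⟩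
  have h2 := sub_eq_iff_eq_add.1 (hr.symm.trans h)
  rw [h2]; abel

lemma h_rec0 (hd : ∀ m, (p m).degree = m)
    (ho : ∀ m l, L (p m * p l) = if m = l then 1 else 0) :
    ∃ b : ℝ, X * p 0 = ((p 0).leadingCoeff / (p 1).leadingCoeff) • p 1 + b • p 0 := by
  have h := h_repr hd ho (h_Xsub hd 0)
  rw [Finset.sum_range_one] at h
  exact ⟨_, by rw [add_comm]; exact sub_eq_iff_eq_add.1 h⟩

/-- Christoffel-Darboux -/
lemma h_CD (hd : ∀ m, (p m).degree = m)
    (ho : ∀ m l, L (p m * p l) = if m = l then 1 else 0) (n : ℕ) (x y : ℝ) :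
    ((p n).leadingCoeff / (p (n+1)).leadingCoeff) *
      ((p (n+1)).eval x * (p n).eval y - (p n).eval x * (p (n+1)).eval y) =
    (x - y) * ∑ j ∈ Finset.range (n+1), (p j).eval x * (p j).eval y := by
  induction n with
  | zero =>
    obtain ⟨b, hb⟩ := h_rec0 hd ho
    have h1 := congrArg (Polynomial.eval x) hb
    have h2 := congrArg (Polynomial.eval y) hb
    simp only [Polynomial.eval_mul, Polynomial.eval_X, Polynomial.eval_add, Polynomial.eval_smul,
      smul_eq_mul] at h1 h2
    rw [Finset.sum_range_one, zero_add]
    linear_combination (-(p 0).eval y) * h1 + (p 0).eval x * h2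
  | succ m ih =>
    obtain ⟨b, hb⟩ := h_rec hd ho m
    have h1 := congrArg (Polynomial.eval x) hb
    have h2 := congrArg (Polynomial.eval y) hb
    simp only [Polynomial.eval_mul, Polynomial.eval_X, Polynomial.eval_add, Polynomial.eval_smul,
      smul_eq_mul] at h1 h2
    rw [Finset.sum_range_succ, mul_add, ← ih]
    linear_combination (-(p (m+1)).eval y) * h1 + (p (m+1)).eval x * h2

lemma h_CD' (hd : ∀ m, (p m).degree = m)
    (ho : ∀ m l, L (p m * p l) = if m = l then 1 else 0) (n : ℕ) (y : ℝ) :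
    ((p n).leadingCoeff / (p (n+1)).leadingCoeff) *
      ((p (n+1)).derivative.eval y * (p n).eval y - (p n).derivative.eval y * (p (n+1)).eval y) =
    ∑ j ∈ Finset.range (n+1), ((p j).eval y) ^ 2 := by
  have key : C ((p n).leadingCoeff / (p (n+1)).leadingCoeff) *
      (p (n+1) * C ((p n).eval y) - p n * C ((p (n+1)).eval y)) =
    (X - C y) * ∑ j ∈ Finset.range (n+1), p j * C ((p j).eval y) := by
    refine Polynomial.funext fun x => ?_
    have := h_CD hd ho n x y
    simpa [Polynomial.eval_finsetSum] using this
  have h2 := congrArg (fun q => Polynomial.eval y (derivative q)) key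
  simp only [derivative_mul, derivative_C, derivative_sub, derivative_X] at h2
  simp [Polynomial.eval_finsetSum] at h2
  rw [h2]
  exact Finset.sum_congr rfl fun j _ => by ring

lemma h_kernel_deg (hd : ∀ m, (p m).degree = m) (c : ℕ → ℝ) (n : ℕ) :
    (∑ j ∈ Finset.range n, c j • p j).degree < n := by
  rw [← Polynomial.mem_degreeLT]
  refine Submodule.sum_mem _ fun j hj => Submodule.smul_mem _ _ ?_
  rw [Polynomial.mem_degreeLT, hd]
  exact_mod_cast Finset.mem_range.1 hj

/-- sign of consecutive product -/
lemma h_sign (hd : ∀ m, (p m).degree = m)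
    (ho : ∀ m l, L (p m * p l) = if m = l then 1 else 0) (n : ℕ) (x : ℝ) :
    L ((C x - X) * (∑ j ∈ Finset.range (n+1), (p j).eval x • p j) ^ 2) =
    ((p n).leadingCoeff / (p (n+1)).leadingCoeff) * ((p (n+1)).eval x * (p n).eval x) := by
  set K := ∑ j ∈ Finset.range (n+1), (p j).eval x • p j with hK
  have key : (C x - X) * K = ((p n).leadingCoeff / (p (n+1)).leadingCoeff) •
      ((p (n+1)).eval x • p n - (p n).eval x • p (n+1)) := by
    refine Polynomial.funext fun y => ?_
    have := h_CD hd ho n x y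
    simp [hK, Polynomial.eval_finsetSum]
    exact this.symm
  have h1 : L (p n * K) = (p n).eval x := by
    rw [mul_comm, hK, h_coef ho, if_pos (by omega)]
  have h2 : L (p (n+1) * K) = 0 := by
    rw [mul_comm, hK, h_coef ho, if_neg (by omega)]
  rw [pow_two, ← mul_assoc, key, smul_mul_assoc, map_smul, sub_mul, map_sub, smul_mul_assoc,
    smul_mul_assoc, map_smul, map_smul, h1, h2]
  simp

end AlgHelpers

section AnaHelpers

lemma h_ae {μ : Measure ℝ} {M : ℝ} (hsupp : measSupport μ ⊆ Set.Icc (-M) M) :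
    ∀ᵐ x ∂μ, x ∈ Set.Icc (-M) M := by
  have h : μ.support ⊆ Set.Icc (-M) M := by
    intro x hx
    refine hsupp fun U hU hxU => ?_
    exact ((Measure.mem_support_iff_forall x).1 hx U (hU.mem_nhds hxU)).ne'
  exact Filter.mem_of_superset Measure.support_mem_ae h

lemma h_int {μ : Measure ℝ} [IsProbabilityMeasure μ] {M : ℝ}
    (hae : ∀ᵐ x ∂μ, x ∈ Set.Icc (-M) M) (q : Polynomial ℝ) :
    Integrable (fun x => q.eval x) μ := by
  have h : IntegrableOn (fun x => q.eval x) (Set.Icc (-M) M) μ :=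
    q.continuous.continuousOn.integrableOn_compact isCompact_Icc
  rwa [IntegrableOn, Measure.restrict_eq_self_of_ae_mem hae] at h

lemma h_exL {μ : Measure ℝ} [IsProbabilityMeasure μ] {M : ℝ}
    (hae : ∀ᵐ x ∂μ, x ∈ Set.Icc (-M) M) :
    ∃ L : Polynomial ℝ →ₗ[ℝ] ℝ, ∀ q, L q = ∫ x, q.eval x ∂μ := by
  refine ⟨{ toFun := fun q => ∫ x, q.eval x ∂μ, map_add' := ?_, map_smul' := ?_ }, fun q => rfl⟩
  · intro q r
    simp only [Polynomial.eval_add]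
    exact integral_add (h_int hae q) (h_int hae r)
  · intro c q
    simp only [Polynomial.eval_smul, smul_eq_mul, RingHom.id_apply]
    exact integral_const_mul _ _

lemma h_mono {μ : Measure ℝ} [IsProbabilityMeasure μ] {M : ℝ}
    (hae : ∀ᵐ x ∂μ, x ∈ Set.Icc (-M) M) {L : Polynomial ℝ →ₗ[ℝ] ℝ}
    (hL : ∀ q, L q = ∫ x, q.eval x ∂μ) {q r : Polynomial ℝ}
    (h : ∀ x ∈ Set.Icc (-M) M, q.eval x ≤ r.eval x) : L q ≤ L r := by
  rw [hL, hL]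
  refine integral_mono_ae (h_int hae q) (h_int hae r) ?_
  filter_upwards [hae] with x hx using h x hx

lemma h_lint {g g' : ℝ → ℝ} {c B : ℝ} (hd : ∀ x ∈ Set.Ici c, HasDerivAt g (g' x) x)
    (h0 : ∀ x ∈ Set.Ici c, 0 ≤ g' x) (hc : 0 ≤ g c) (hB : ∀ x, g x ≤ B) :
    ∫⁻ x in Set.Ioi c, ENNReal.ofReal (g' x) ≤ ENNReal.ofReal B := by
  have hm : MonotoneOn g (Set.Ici c) := by
    refine monotoneOn_of_deriv_nonneg (convex_Ici c)
      (fun x hx => (hd x hx).continuousAt.continuousWithinAt)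
      (fun x hx => (hd x (interior_subset hx)).differentiableAt.differentiableWithinAt)
      (fun x hx => ?_)
    rw [(hd x (interior_subset hx)).deriv]
    exact h0 x (interior_subset hx)
  have hm' : Monotone (fun x => g (max c x)) := fun x y hxy =>
    hm (Set.mem_Ici.2 (le_max_left _ _)) (Set.mem_Ici.2 (le_max_left _ _)) (max_le_max le_rfl hxy)
  have hbd : BddAbove (Set.range (fun x => g (max c x))) := by
    refine ⟨B, ?_⟩
    rintro _ ⟨x, rfl⟩
    exact hB _
  have ht := tendsto_atTop_ciSup hm' hbd
  have ht' : Tendsto g atTop (nhds (⨆ x, g (max c x))) := by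
    refine ht.congr' ?_
    filter_upwards [eventually_ge_atTop c] with x hx
    rw [max_eq_right hx]
  have hI := integrableOn_Ioi_deriv_of_nonneg' hd (fun x hx => h0 x (Set.mem_Ici.2 (le_of_lt hx))) ht'
  have hv := integral_Ioi_of_hasDerivAt_of_nonneg' hd (fun x hx => h0 x (Set.mem_Ici.2 (le_of_lt hx))) ht'
  rw [← ofReal_integral_eq_lintegral_ofReal hI]
  · refine ENNReal.ofReal_le_ofReal ?_
    rw [hv]
    have : (⨆ x, g (max c x)) ≤ B := ciSup_le fun x => hB _
    linarith
  · refine (ae_restrict_iff' measurableSet_Ioi).2 (ae_of_all _ fun x hx => h0 x (Set.mem_Ici.2 (le_of_lt hx)))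

lemma h_lint_neg (f : ℝ → ℝ≥0∞) (c : ℝ) :
    ∫⁻ x in Set.Iio (-c), f x = ∫⁻ x in Set.Ioi c, f (-x) := by
  have h := (Measure.measurePreserving_neg (volume : Measure ℝ)).setLIntegral_comp_preimage_emb
    (MeasurableEquiv.neg ℝ).measurableEmbedding f (Set.Iio (-c))
  rw [← h]
  congr 2
  ext x
  simp

end AnaHelpers

section MainHelpers

lemma h_Kpos {p : ℕ → Polynomial ℝ} (hd : ∀ m, (p m).degree = m) (n : ℕ) (x : ℝ) :
    0 < ∑ j ∈ Finset.range (n+1), ((p j).eval x) ^ 2 := by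
  have h0 : (p 0).eval x ≠ 0 := by
    have h1 : (p 0).degree = 0 := hd 0
    rw [Polynomial.eq_C_of_degree_eq_zero h1, Polynomial.eval_C]
    intro h2
    have h3 := Polynomial.eq_C_of_degree_eq_zero h1
    rw [h2] at h3
    rw [h3] at h1
    simp at h1
  refine Finset.sum_pos' (fun j _ => sq_nonneg _) ⟨0, by simp, by positivity⟩

variable {μ : Measure ℝ} [IsProbabilityMeasure μ] {M : ℝ} {p : ℕ → Polynomial ℝ}
  {L : Polynomial ℝ →ₗ[ℝ] ℝ}

lemma h_bound (hae : ∀ᵐ x ∂μ, x ∈ Set.Icc (-M) M)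
    (hL : ∀ q, L q = ∫ x, q.eval x ∂μ) (hd : ∀ m, (p m).degree = m)
    (ho : ∀ m l, L (p m * p l) = if m = l then 1 else 0) {k n : ℕ} (hkn : k ≤ n) (x : ℝ) :
    x ^ (2 * k) * ∑ j ∈ Finset.range (n - k + 1), ((p j).eval x) ^ 2 ≤
      M ^ (2 * k) * ∑ j ∈ Finset.range (n + 1), ((p j).eval x) ^ 2 := by
  set Q := ∑ j ∈ Finset.range (n - k + 1), (p j).eval x • p j with hQ
  have hQd : Q.degree < ((n - k + 1 : ℕ) : WithBot ℕ) := h_kernel_deg hd _ _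
  have hrd : (X ^ k * Q).degree < ((n + 1 : ℕ) : WithBot ℕ) := by
    by_cases hQ0 : Q = 0
    · rw [hQ0, mul_zero, Polynomial.degree_zero]
      exact WithBot.bot_lt_coe _
    rw [Polynomial.degree_mul, Polynomial.degree_X_pow, Polynomial.degree_eq_natDegree hQ0]
    rw [Polynomial.degree_eq_natDegree hQ0] at hQd
    have h1 : Q.natDegree < n - k + 1 := by exact_mod_cast hQd
    have h2 : k + Q.natDegree < n + 1 := by omega
    exact_mod_cast h2
  have hcs := h_cs hd ho hrd x
  have hQe : Q.eval x = ∑ j ∈ Finset.range (n - k + 1), ((p j).eval x) ^ 2 := by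
    simp [hQ, Polynomial.eval_finsetSum, pow_two]
  have hQ2 : L (Q ^ 2) = ∑ j ∈ Finset.range (n - k + 1), ((p j).eval x) ^ 2 := by
    rw [hQ, h_sq ho]
  have hle : L ((X ^ k * Q) ^ 2) ≤ M ^ (2 * k) * L (Q ^ 2) := by
    have : M ^ (2 * k) * L (Q ^ 2) = L (M ^ (2 * k) • Q ^ 2) := by simp
    rw [this]
    refine h_mono hae hL fun y hy => ?_
    simp only [Polynomial.eval_pow, Polynomial.eval_mul, Polynomial.eval_X, Polynomial.eval_smul,
      smul_eq_mul]
    rw [mul_pow, ← pow_mul, mul_comm k 2, pow_mul, pow_mul]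
    have : y ^ 2 ≤ M ^ 2 := by nlinarith [hy.1, hy.2]
    gcongr
  have hK := h_Kpos hd (n - k) x
  have hKn := h_Kpos hd n x
  rw [hQ2] at hle
  rw [Polynomial.eval_mul, Polynomial.eval_pow, Polynomial.eval_X, hQe] at hcs
  set A := ∑ j ∈ Finset.range (n - k + 1), ((p j).eval x) ^ 2
  set B := ∑ j ∈ Finset.range (n + 1), ((p j).eval x) ^ 2
  have h3 := hcs.trans (mul_le_mul_of_nonneg_right hle hKn.le)
  refine le_of_mul_le_mul_right ?_ hK
  calc x ^ (2 * k) * A * A = (x ^ k * A) ^ 2 := by ring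
    _ ≤ _ := h3
    _ = _ := by ring

lemma h_signR (hae : ∀ᵐ x ∂μ, x ∈ Set.Icc (-M) M)
    (hL : ∀ q, L q = ∫ x, q.eval x ∂μ) (hd : ∀ m, (p m).degree = m)
    (ho : ∀ m l, L (p m * p l) = if m = l then 1 else 0) (n : ℕ) {x : ℝ} (hx : M + 1 ≤ x) :
    0 < ((p n).leadingCoeff / (p (n+1)).leadingCoeff) * ((p (n+1)).eval x * (p n).eval x) := by
  rw [← h_sign hd ho]
  refine lt_of_lt_of_le (h_Kpos hd n x) ?_
  rw [← h_sq ho]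
  refine h_mono hae hL fun y hy => ?_
  rw [Polynomial.eval_mul, Polynomial.eval_pow, Polynomial.eval_sub, Polynomial.eval_C,
    Polynomial.eval_X]
  exact le_mul_of_one_le_left (sq_nonneg _) (by linarith [hy.2])

lemma h_signL (hae : ∀ᵐ x ∂μ, x ∈ Set.Icc (-M) M)
    (hL : ∀ q, L q = ∫ x, q.eval x ∂μ) (hd : ∀ m, (p m).degree = m)
    (ho : ∀ m l, L (p m * p l) = if m = l then 1 else 0) (n : ℕ) {x : ℝ} (hx : x ≤ -(M + 1)) :
    ((p n).leadingCoeff / (p (n+1)).leadingCoeff) * ((p (n+1)).eval x * (p n).eval x) < 0 := by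
  rw [← h_sign hd ho]
  have h1 := h_Kpos hd n x
  rw [← h_sq ho] at h1
  set Q := ∑ j ∈ Finset.range (n + 1), (p j).eval x • p j
  have h2 : L ((C x - X) * Q ^ 2) ≤ L (- Q ^ 2) := by
    refine h_mono hae hL fun y hy => ?_
    rw [Polynomial.eval_mul, Polynomial.eval_neg, Polynomial.eval_pow, Polynomial.eval_sub,
      Polynomial.eval_C, Polynomial.eval_X]
    nlinarith [sq_nonneg (Q.eval y), hy.1]
  rw [map_neg] at h2
  linarith

lemma h_deriv (hd : ∀ m, (p m).degree = m)
    (ho : ∀ m l, L (p m * p l) = if m = l then 1 else 0) (n : ℕ) {a x : ℝ}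
    (ha : a = (p n).leadingCoeff / (p (n + 1)).leadingCoeff) (hx : (p n).eval x ≠ 0) :
    HasDerivAt (fun y => Real.arctan (a * (p (n+1)).eval y / (p n).eval y))
      ((∑ j ∈ Finset.range (n+1), ((p j).eval x) ^ 2) /
        (a ^ 2 * ((p (n + 1)).eval x) ^ 2 + ((p n).eval x) ^ 2)) x := by
  have h := ((((p (n+1)).hasDerivAt x).const_mul a).div ((p n).hasDerivAt x) hx).arctan
  refine h.congr_deriv ?_
  rw [← h_CD' hd ho, ← ha]
  have : a ^ 2 * ((p (n + 1)).eval x) ^ 2 + ((p n).eval x) ^ 2 ≠ 0 := by positivity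
  have h2 : 1 + (a * (p (n + 1)).eval x / (p n).eval x) ^ 2 ≠ 0 := by positivity
  simp only [Pi.div_apply]
  field_simp
  ring

lemma h_total (hae : ∀ᵐ x ∂μ, x ∈ Set.Icc (-M) M) (hM : 0 ≤ M)
    (hL : ∀ q, L q = ∫ x, q.eval x ∂μ) (hd : ∀ m, (p m).degree = m)
    (ho : ∀ m l, L (p m * p l) = if m = l then 1 else 0) (n : ℕ) {a : ℝ}
    (ha : a = (p n).leadingCoeff / (p (n + 1)).leadingCoeff) :
    ∫⁻ x in {x : ℝ | M + 1 < |x|}, ENNReal.ofReal ((∑ j ∈ Finset.range (n+1), ((p j).eval x) ^ 2) /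
        (a ^ 2 * ((p (n + 1)).eval x) ^ 2 + ((p n).eval x) ^ 2)) ≤ ENNReal.ofReal π := by
  have hset : {x : ℝ | M + 1 < |x|} = Set.Ioi (M + 1) ∪ Set.Iio (-(M + 1)) := by
    ext x
    simp only [Set.mem_ofPred_eq, Set.mem_union, Set.mem_Ioi, Set.mem_Iio, lt_abs]
    constructor <;> rintro (h | h)
    · exact Or.inl h
    · exact Or.inr (by linarith)
    · exact Or.inl h
    · exact Or.inr (by linarith)
  have hpos : ∀ x, 0 ≤ (∑ j ∈ Finset.range (n+1), ((p j).eval x) ^ 2) /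
        (a ^ 2 * ((p (n + 1)).eval x) ^ 2 + ((p n).eval x) ^ 2) := fun x => by positivity
  have hsign : ∀ x, a * (p (n+1)).eval x / (p n).eval x =
      a * ((p (n+1)).eval x * (p n).eval x) / ((p n).eval x) ^ 2 := by
    intro x
    by_cases h : (p n).eval x = 0
    · simp [h]
    · field_simp
  have hR : ∫⁻ x in Set.Ioi (M + 1), ENNReal.ofReal
      ((∑ j ∈ Finset.range (n+1), ((p j).eval x) ^ 2) /
        (a ^ 2 * ((p (n + 1)).eval x) ^ 2 + ((p n).eval x) ^ 2)) ≤ ENNReal.ofReal (π / 2) := by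
    refine h_lint (g := fun y => Real.arctan (a * (p (n+1)).eval y / (p n).eval y))
      (fun x hx => h_deriv hd ho n ha ?_) (fun x _ => hpos x) ?_
      (fun x => (Real.arctan_lt_pi_div_two _).le)
    · intro h
      have := h_signR hae hL hd ho n (Set.mem_Ici.1 hx)
      simp [h] at this
    · have := h_signR hae hL hd ho n (le_refl (M+1))
      rw [← ha] at this
      simp only [Real.arctan_nonneg]
      rw [hsign]
      positivity
  have hLL : ∫⁻ x in Set.Iio (-(M + 1)), ENNReal.ofReal
      ((∑ j ∈ Finset.range (n+1), ((p j).eval x) ^ 2) /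
        (a ^ 2 * ((p (n + 1)).eval x) ^ 2 + ((p n).eval x) ^ 2)) ≤ ENNReal.ofReal (π / 2) := by
    rw [h_lint_neg]
    refine h_lint (g := fun y => - Real.arctan (a * (p (n+1)).eval (-y) / (p n).eval (-y)))
      (g' := fun x => (∑ j ∈ Finset.range (n+1), ((p j).eval (-x)) ^ 2) /
        (a ^ 2 * ((p (n + 1)).eval (-x)) ^ 2 + ((p n).eval (-x)) ^ 2))
      (fun x hx => ?_) (fun x _ => hpos (-x)) ?_
      (fun x => by linarith [(Real.neg_pi_div_two_lt_arctan
        (a * (p (n+1)).eval (-x) / (p n).eval (-x)))])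
    · have h0 : (p n).eval (-x) ≠ 0 := by
        intro h
        have := h_signL hae hL hd ho n (neg_le_neg (Set.mem_Ici.1 hx))
        simp [h] at this
      have h1 := h_deriv hd ho n ha h0
      have h2 := (h1.scomp x (hasDerivAt_neg x)).neg
      refine h2.congr_deriv ?_
      simp
    · have := h_signL hae hL hd ho n (le_refl (-(M+1)))
      rw [← ha] at this
      simp only [← Real.arctan_neg, Real.arctan_nonneg, Left.nonneg_neg_iff]
      rw [hsign]
      exact div_nonpos_of_nonpos_of_nonneg this.le (sq_nonneg _)
  rw [hset, lintegral_union measurableSet_Iio]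
  · refine (add_le_add hR hLL).trans ?_
    rw [← ENNReal.ofReal_add (by positivity) (by positivity)]
    rw [add_halves]
  · rw [Set.disjoint_left]
    intro x hx hx'
    simp only [Set.mem_Ioi, Set.mem_Iio] at hx hx'
    linarith

end MainHelpers

/-- For `μ` a probability measure on `ℝ` with infinite support in `[-M, M]`,
CD kernel `K_n`, `a_{n+1} = κ_n/κ_{n+1}` and
`dρ_n = dx/(π(a_{n+1}² p_{n+1}² + p_n²))`, for every `k` and all `n ≥ k`,
`∫_{|x| > M+1} |x|^k K_{n-k}(x,x;μ) dρ_n(x) ≤ M^{2k}/(M+1)^k`; in particular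
this integral is bounded uniformly in `n`. -/
theorem stmt_15
    (μ : Measure ℝ) [IsProbabilityMeasure μ] (M : ℝ)
    (hsupp : measSupport μ ⊆ Set.Icc (-M) M)
    (hinf : (measSupport μ).Infinite)
    (p : ℕ → Polynomial ℝ)
    (hdeg : ∀ m, (p m).natDegree = m)
    (hlead : ∀ m, 0 < (p m).leadingCoeff)
    (horth : ∀ m l, ∫ x, (p m).eval x * (p l).eval x ∂μ = if m = l then 1 else 0)
    (k n : ℕ) (hkn : k ≤ n)
    (a : ℝ) (ha : a = (p n).leadingCoeff / (p (n + 1)).leadingCoeff)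
    (ρ : Measure ℝ)
    (hρ : ρ = volume.withDensity (fun x => ENNReal.ofReal
      ((π * (a ^ 2 * ((p (n + 1)).eval x) ^ 2 + ((p n).eval x) ^ 2))⁻¹))) :
    ∫ x in {x : ℝ | M + 1 < |x|},
        |x| ^ k * (∑ j ∈ Finset.range (n - k + 1), ((p j).eval x) ^ 2) ∂ρ ≤
      M ^ (2 * k) / (M + 1) ^ k := by
  have hd := h_degree hdeg hlead
  have hae := h_ae hsupp
  have hM : 0 ≤ M := by
    obtain ⟨x, hx⟩ := hinf.nonempty
    have := hsupp hx
    linarith [this.1, this.2]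
  obtain ⟨L, hL⟩ := h_exL hae
  have ho : ∀ m l, L (p m * p l) = if m = l then 1 else 0 := by
    intro m l
    rw [hL, ← horth m l]
    simp only [Polynomial.eval_mul]
  have hS : MeasurableSet {x : ℝ | M + 1 < |x|} :=
    measurableSet_lt measurable_const measurable_id.abs
  set c := M ^ (2 * k) / (M + 1) ^ k with hc
  have hc0 : 0 ≤ c := by positivity
  have hcontD : Measurable (fun x => ENNReal.ofReal
      ((π * (a ^ 2 * ((p (n + 1)).eval x) ^ 2 + ((p n).eval x) ^ 2))⁻¹)) := by
    have h1 := (p (n+1)).continuous.measurable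
    have h2 := (p n).continuous.measurable
    fun_prop
  have hcontF : Measurable (fun x : ℝ =>
      |x| ^ k * (∑ j ∈ Finset.range (n - k + 1), ((p j).eval x) ^ 2)) := by
    have h1 : Continuous (fun x : ℝ =>
      |x| ^ k * (∑ j ∈ Finset.range (n - k + 1), ((p j).eval x) ^ 2)) := by
      have := fun j => (p j).continuous
      fun_prop
    exact h1.measurable
  rw [integral_eq_lintegral_of_nonneg_ae (ae_of_all _ fun x => by
    have : 0 ≤ ∑ j ∈ Finset.range (n - k + 1), ((p j).eval x) ^ 2 :=
      Finset.sum_nonneg fun j _ => sq_nonneg _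
    simp only [Pi.zero_apply]
    positivity) hcontF.aestronglyMeasurable]
  refine ENNReal.toReal_le_of_le_ofReal hc0 ?_
  rw [hρ, setLIntegral_withDensity_eq_setLIntegral_mul _ hcontD hcontF.ennreal_ofReal hS]
  calc _ ≤ ∫⁻ x in {x : ℝ | M + 1 < |x|}, ENNReal.ofReal (c / π) * ENNReal.ofReal
          ((∑ j ∈ Finset.range (n+1), ((p j).eval x) ^ 2) /
          (a ^ 2 * ((p (n + 1)).eval x) ^ 2 + ((p n).eval x) ^ 2)) := by
        refine setLIntegral_mono' hS fun x hx => ?_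
        have hx : M + 1 < |x| := hx
        rw [Pi.mul_apply, ← ENNReal.ofReal_mul (by positivity),
          ← ENNReal.ofReal_mul (by positivity)]
        refine ENNReal.ofReal_le_ofReal ?_
        have hb := h_bound hae hL hd ho hkn x
        have hKn := h_Kpos hd n x
        set A := ∑ j ∈ Finset.range (n - k + 1), ((p j).eval x) ^ 2
        set B := ∑ j ∈ Finset.range (n + 1), ((p j).eval x) ^ 2
        set D := a ^ 2 * ((p (n + 1)).eval x) ^ 2 + ((p n).eval x) ^ 2 with hD
        have hD0 : 0 ≤ D := by positivity
        have hx0 : 0 < |x| ^ k := pow_pos (by linarith) k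
        have h1 : |x| ^ k * A ≤ c * B := by
          have h2 : x ^ (2 * k) = |x| ^ k * |x| ^ k := by
            rw [pow_mul, ← sq_abs, ← pow_mul, ← pow_add]; congr 1; omega
          rw [h2] at hb
          have h3 : |x| ^ k * A ≤ M ^ (2 * k) * B / |x| ^ k := by
            rw [le_div_iff₀ hx0]; linarith
          refine h3.trans ?_
          rw [hc, div_mul_eq_mul_div]
          have h4 : (M + 1) ^ k ≤ |x| ^ k := by gcongr
          gcongr
        calc (π * D)⁻¹ * (|x| ^ k * A) ≤ (π * D)⁻¹ * (c * B) := by gcongr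
          _ = c / π * (B / D) := by rw [mul_inv]; ring
    _ = ENNReal.ofReal (c / π) * ∫⁻ x in {x : ℝ | M + 1 < |x|}, ENNReal.ofReal
          ((∑ j ∈ Finset.range (n+1), ((p j).eval x) ^ 2) /
          (a ^ 2 * ((p (n + 1)).eval x) ^ 2 + ((p n).eval x) ^ 2)) :=
        lintegral_const_mul' _ _ ENNReal.ofReal_ne_top
    _ ≤ ENNReal.ofReal (c / π) * ENNReal.ofReal π := by
        gcongr
        exact h_total hae hM hL hd ho n ha
    _ = ENNReal.ofReal c := by
        rw [← ENNReal.ofReal_mul (by positivity), div_mul_cancel₀ _ Real.pi_ne_zero]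
end
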